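/- arXiv:1902.07745 — 10 statements merged into one kernel-verified Lean document; each statement's English description precedes it below -/
import Mathlib

section
/- Let R be a commutative ring and S a commutative R-algebra. Then the following are equivalent: (i) S is flat as an R-module, finitely presented as an R-algebra, and separable, i.e. S is projective as a module over S ⊗_R S, where S is regarded as an (S ⊗_R S)-module via the multiplication map s ⊗ s' ↦ ss'; (ii) S is finitely presented as an R-algebra and S is formally étale over R, i.e. for every commutative R-algebra B and every ideal I of B with I² = 0, every R-algebra homomorphism S → B/I lifts uniquely to an R-algebra homomorphism S → B. -/
/-! The kernel `J` of the multiplication map `S ⊗[R] S → S` controls both sides. On the one hand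
`J / J² = Ω[S⁄R]`, so `S` is formally unramified over `R` iff `J` is idempotent. On the other hand
`S = (S ⊗[R] S) / J` is projective over `S ⊗[R] S` iff `J` is generated by an idempotent. When `S`
is essentially of finite type, `J` is finitely generated and the two conditions agree. Finally, a
finitely presented algebra is étale iff it is flat and formally unramified. -/

open TensorProduct

section Projective

variable {A B : Type*} [CommRing A] [CommRing B] [Algebra A B]

theorem exists_isIdempotentElem_ker_algebraMap_eq_span [Module.Projective A B]
    (hsurj : Function.Surjective (algebraMap A B)) :
    ∃ e : A, IsIdempotentElem e ∧ RingHom.ker (algebraMap A B) = Ideal.span {e} := by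
  obtain ⟨σ, hσ⟩ := Module.projective_lifting_property (Algebra.linearMap A B) .id hsurj
  have map_section_one : algebraMap A B (σ 1) = 1 := LinearMap.congr_fun hσ 1
  have mul_section_one {a : A} (ha : a ∈ RingHom.ker (algebraMap A B)) : a * σ 1 = 0 := by
    rw [← smul_eq_mul, ← map_smul, Algebra.smul_def, RingHom.mem_ker.mp ha, zero_mul, map_zero]
  have one_sub_mem : 1 - σ 1 ∈ RingHom.ker (algebraMap A B) := by
    rw [RingHom.mem_ker, map_sub, map_one, map_section_one, sub_self]
  refine ⟨1 - σ 1, ?_, le_antisymm (fun a ha ↦ ?_) ?_⟩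
  · rw [IsIdempotentElem, mul_one_sub, mul_section_one one_sub_mem, sub_zero]
  · exact Ideal.mem_span_singleton'.mpr ⟨a, by rw [mul_one_sub, mul_section_one ha, sub_zero]⟩
  · rwa [Ideal.span_singleton_le_iff_mem]

theorem projective_quotient_span_singleton {e : A} (he : IsIdempotentElem e) :
    Module.Projective A (A ⧸ Ideal.span {e}) := by
  let σ : (A ⧸ Ideal.span {e}) →ₗ[A] A :=
    Submodule.liftQ _ (LinearMap.mulRight A (1 - e)) <| by
      rw [Ideal.span_singleton_le_iff_mem, LinearMap.mem_ker, LinearMap.mulRight_apply,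
        he.mul_one_sub_self]
  refine .of_split σ (Submodule.mkQ _) ?_
  have mk_e : Ideal.Quotient.mk (Ideal.span {e}) e = 0 :=
    Ideal.Quotient.eq_zero_iff_mem.mpr (Ideal.mem_span_singleton_self e)
  ext
  change Ideal.Quotient.mk (Ideal.span {e}) (1 * (1 - e)) = 1
  rw [one_mul, map_sub, map_one, mk_e, sub_zero]

theorem projective_iff_exists_isIdempotentElem_ker_algebraMap_eq_span
    (hsurj : Function.Surjective (algebraMap A B)) :
    Module.Projective A B ↔
      ∃ e : A, IsIdempotentElem e ∧ RingHom.ker (algebraMap A B) = Ideal.span {e} := by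
  refine ⟨fun _ ↦ exists_isIdempotentElem_ker_algebraMap_eq_span hsurj, fun ⟨e, he, hker⟩ ↦ ?_⟩
  have := projective_quotient_span_singleton he
  exact .of_equiv ((Submodule.quotEquivOfEq _ _ hker.symm).trans
    ((Algebra.linearMap A B).quotKerEquivOfSurjective hsurj))

end Projective

section Separable

variable (R S : Type*) [CommRing R] [CommRing S] [Algebra R S]

/-- Separability of an algebra over a commutative ring: `S` is projective over `S ⊗[R] S`, acting
through the multiplication map. This differs from `Algebra.IsSeparable`, which asks that every
element have a separable minimal polynomial. -/
def IsSeparableAlgebra : Prop :=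
  letI : Algebra (S ⊗[R] S) S := (Algebra.TensorProduct.lmul' R).toRingHom.toAlgebra
  Module.Projective (S ⊗[R] S) S

theorem isSeparableAlgebra_iff_exists_isIdempotentElem :
    IsSeparableAlgebra R S ↔
      ∃ e : S ⊗[R] S, IsIdempotentElem e ∧ KaehlerDifferential.ideal R S = Ideal.span {e} :=
  letI : Algebra (S ⊗[R] S) S := (Algebra.TensorProduct.lmul' R).toRingHom.toAlgebra
  projective_iff_exists_isIdempotentElem_ker_algebraMap_eq_span fun s ↦
    ⟨s ⊗ₜ 1, (Algebra.TensorProduct.lmul'_apply_tmul s 1).trans (mul_one s)⟩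

theorem isSeparableAlgebra_iff_formallyUnramified [Algebra.EssFiniteType R S] :
    IsSeparableAlgebra R S ↔ Algebra.FormallyUnramified R S := by
  rw [isSeparableAlgebra_iff_exists_isIdempotentElem, Algebra.formallyUnramified_iff,
    KaehlerDifferential, Ideal.cotangent_subsingleton_iff,
    Ideal.isIdempotentElem_iff_of_fg _ (KaehlerDifferential.ideal_fg R S)]

theorem formallyEtale_iff_flat_and_isSeparableAlgebra [Algebra.FinitePresentation R S] :
    Algebra.FormallyEtale R S ↔ Module.Flat R S ∧ IsSeparableAlgebra R S := by
  rw [isSeparableAlgebra_iff_formallyUnramified]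
  constructor
  · intro _
    have : Algebra.Etale R S := { }
    exact ⟨inferInstance, inferInstance⟩
  · rintro ⟨_, _⟩
    exact Algebra.Etale.of_formallyUnramified_of_flat.formallyEtale

end Separable

theorem etale_iff_flat_separable_finitePresentation_general
    (R : Type u) (S : Type v) [CommRing R] [CommRing S] [Algebra R S] :
    (Module.Flat R S ∧ Algebra.FinitePresentation R S ∧ IsSeparableAlgebra R S) ↔
    (Algebra.FinitePresentation R S ∧
      ∀ (B : Type (max u v)) [CommRing B] [Algebra R B] (I : Ideal B), I ^ 2 = ⊥ →
        ∀ f : S →ₐ[R] B ⧸ I, ∃! g : S →ₐ[R] B,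
          (Ideal.Quotient.mkₐ R I).comp g = f) := by
  rw [and_left_comm]
  refine and_congr_right fun _ ↦ ?_
  simp only [← formallyEtale_iff_flat_and_isSeparableAlgebra,
    Algebra.FormallyEtale.iff_comp_bijective, Function.bijective_iff_existsUnique]

/-- For a commutative ring `R` and a commutative `R`-algebra `S`, the
following are equivalent: (i) `S` is flat, finitely presented and separable (projective as a
module over `S ⊗[R] S` via the multiplication map); (ii) `S` is finitely presented and
formally étale (unique lifting along square-zero ideals). -/
theorem etale_iff_flat_separable_finitePresentation
    (R S : Type u) [CommRing R] [CommRing S] [Algebra R S] :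
    (Module.Flat R S ∧ Algebra.FinitePresentation R S ∧
      (letI : Algebra (S ⊗[R] S) S := (Algebra.TensorProduct.lmul' R).toRingHom.toAlgebra;
        Module.Projective (S ⊗[R] S) S)) ↔
    (Algebra.FinitePresentation R S ∧
      ∀ (B : Type u) [CommRing B] [Algebra R B] (I : Ideal B), I ^ 2 = ⊥ →
        ∀ f : S →ₐ[R] B ⧸ I, ∃! g : S →ₐ[R] B,
          (Ideal.Quotient.mkₐ R I).comp g = f) :=
  etale_iff_flat_separable_finitePresentation_general R S
end

section
/- Let R be a commutative ring, n a positive integer, and S a commutative R-algebra. Then the following are equivalent: (i) S is an étale R-algebra of degree n, i.e. S is finitely presented and formally étale over R, S is a finite projective R-module, and the rank of S at every prime ideal of R equals n; (ii) there exists a commutative R-algebra T that is finite étale over R (finitely presented, formally étale, and finitely generated as an R-module) and faithfully flat over R, such that T ⊗_R S is isomorphic to the product algebra T^n as a T-algebra. -/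
open TensorProduct

/-!
A finite étale algebra of constant rank becomes split over some finite étale cover
(`Algebra.IsFiniteSplit.exists_tensorProduct_of_etale`), by splitting off the diagonal of
`S ⊗[R] S` and inducting on the rank. Rank is invariant under base change, so the number of factors
of the split algebra is the rank of `S`. Conversely, split algebras are finite étale, and both
finiteness and étaleness descend along a faithfully flat map; so does the value of a constant rank,
since such a map is surjective on spectra.
-/

section Rank

open Module

variable {R : Type*} [CommRing R]

lemma rankAtStalk_fun (ι : Type*) [Finite ι] (p : PrimeSpectrum R) :
    rankAtStalk (ι → R) p = Nat.card ι := by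
  have : Nontrivial R := p.nontrivial
  simp [rankAtStalk_eq_finrank_of_free, finrank_eq_nat_card_basis (Pi.basisFun R ι)]

lemma forall_rankAtStalk_baseChange_eq_iff (T : Type*) [CommRing T] [Algebra R T]
    [FaithfullyFlat R T] {M : Type*} [AddCommGroup M] [Module R M] [Module.Finite R M] [Flat R M]
    {n : ℕ} :
    (∀ q : PrimeSpectrum T, rankAtStalk (T ⊗[R] M) q = n) ↔
      ∀ p : PrimeSpectrum R, rankAtStalk M p = n := by
  have comap_surjective := PrimeSpectrum.comap_surjective_of_faithfullyFlat (A := R) (B := T)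
  simp_rw [comap_surjective.forall, rankAtStalk_baseChange]

end Rank

variable {R S : Type*} [CommRing R] [CommRing S] [Algebra R S]

lemma nonempty_algEquiv_fun_iff_isFiniteSplit_and_rankAtStalk_eq {n : ℕ} :
    Nonempty (S ≃ₐ[R] (Fin n → R)) ↔
      Algebra.IsFiniteSplit R S ∧ ∀ p : PrimeSpectrum R, Module.rankAtStalk S p = n := by
  have rank_eq {m : ℕ} (e : S ≃ₐ[R] (Fin m → R)) (p : PrimeSpectrum R) :
      Module.rankAtStalk S p = m := by
    rw [Module.rankAtStalk_eq_of_equiv e.toLinearEquiv, rankAtStalk_fun, Nat.card_fin]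
  refine ⟨fun ⟨e⟩ ↦ ⟨⟨n, ⟨e⟩⟩, rank_eq e⟩, fun ⟨_, hn⟩ ↦ ?_⟩
  obtain ⟨m, ⟨e⟩⟩ := Algebra.IsFiniteSplit.nonempty_algEquiv_fun R S
  -- Over the zero ring `Fin m → R` does not determine `m`, but then all algebras are zero.
  cases subsingleton_or_nontrivial R
  · have : Subsingleton S := e.toEquiv.subsingleton
    exact ⟨default⟩
  · obtain ⟨p⟩ : Nonempty (PrimeSpectrum R) := inferInstance
    obtain rfl : m = n := (rank_eq e p).symm.trans (hn p)
    exact ⟨e⟩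

lemma projective_of_finite_of_finitePresentation_of_flat [Module.Finite R S]
    [Algebra.FinitePresentation R S] [Module.Flat R S] : Module.Projective R S :=
  have : Module.FinitePresentation R S := .of_finite_of_finitePresentation R S
  Module.Flat.projective_of_finitePresentation

lemma finite_and_etale_of_isFiniteSplit_tensorProduct (T : Type*) [CommRing T] [Algebra R T]
    [Module.FaithfullyFlat R T] [Algebra.IsFiniteSplit T (T ⊗[R] S)] :
    Module.Finite R S ∧ Algebra.Etale R S :=
  ⟨.of_finite_tensorProduct_of_faithfullyFlat T, .of_etale_tensorProduct_of_faithfullyFlat T⟩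

/-- A commutative `R`-algebra `S` is étale of degree `n` (finitely
presented, formally étale, finite projective as an `R`-module, of rank `n` at every prime)
if and only if there is a faithfully flat finite étale `R`-algebra `T` such that
`T ⊗[R] S ≅ T^n` as `T`-algebras. -/
theorem etale_degree_n_iff_split_by_finite_etale_cover
    (R S : Type u) [CommRing R] [CommRing S] [Algebra R S] (n : ℕ) (hn : 0 < n) :
    (Algebra.FinitePresentation R S ∧ Algebra.FormallyEtale R S ∧
      Module.Finite R S ∧ Module.Projective R S ∧
      ∀ p : PrimeSpectrum R, Module.rankAtStalk S p = n) ↔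
    (∃ (T : Type u) (_ : CommRing T) (_ : Algebra R T),
      Algebra.FinitePresentation R T ∧ Algebra.FormallyEtale R T ∧
      Module.Finite R T ∧ Module.FaithfullyFlat R T ∧
      Nonempty ((T ⊗[R] S) ≃ₐ[T] (Fin n → T))) := by
  simp_rw [nonempty_algEquiv_fun_iff_isFiniteSplit_and_rankAtStalk_eq]
  constructor
  · rintro ⟨_, _, _, _, rank_eq⟩
    have : Algebra.Etale R S := { }
    obtain ⟨T, _, _, _, _, _, split⟩ :=
      Algebra.IsFiniteSplit.exists_tensorProduct_of_etale (funext rank_eq)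
    exact ⟨T, _, _, inferInstance, inferInstance, inferInstance, inferInstance, split,
      (forall_rankAtStalk_baseChange_eq_iff T).2 rank_eq⟩
  · rintro ⟨T, _, _, _, _, _, _, _, rank_eq⟩
    obtain ⟨_, _⟩ := finite_and_etale_of_isFiniteSplit_tensorProduct (R := R) (S := S) T
    exact ⟨inferInstance, inferInstance, inferInstance,
      projective_of_finite_of_finitePresentation_of_flat,
      (forall_rankAtStalk_baseChange_eq_iff T).1 rank_eq⟩
end

section
/- Let R be a commutative ring and A a commutative R-algebra that is finitely generated as an R-module. Let a_1, …, a_r be elements of A. Then the following are equivalent: (1) a_1, …, a_r generate A as an R-algebra; (2) there exist elements f_1, …, f_m ∈ R generating the unit ideal of R such that, for each i, the images of a_1, …, a_r in the localization A_{f_i} generate A_{f_i} as an R_{f_i}-algebra; (3) for every maximal ideal m of R, the images of a_1, …, a_r in A_m generate A_m as an R_m-algebra; (4) for every maximal ideal m of R with residue field k(m) = R_m/mR_m, the images of a_1, …, a_r in A ⊗_R k(m) generate A ⊗_R k(m) as a k(m)-algebra. -/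
open TensorProduct

/-!
Let `M` be the quotient of `A` by the `R`-subalgebra `R[s]`, taken as an `R`-module. By right
exactness of the tensor product, the image of `s` generates `B ⊗ A` over `B` exactly when
`B ⊗ M = 0`. All four conditions thus say that base changes of the single finite module `M` vanish,
and passing from residue fields back to `R` is Nakayama's lemma.
-/

lemma toSubmodule_adjoin_one_tmul_image {R A : Type*} (B : Type*) [CommSemiring R] [Semiring A]
    [Algebra R A] [CommSemiring B] [Algebra R B] (s : Set A) :
    Subalgebra.toSubmodule (Algebra.adjoin B (((1 : B) ⊗ₜ[R] ·) '' s)) =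
      (Subalgebra.toSubmodule (Algebra.adjoin R s)).baseChange B := by
  have closure_image : (Submonoid.closure (((1 : B) ⊗ₜ[R] ·) '' s) : Set (B ⊗[R] A)) =
      ((1 : B) ⊗ₜ[R] ·) '' (Submonoid.closure s : Set A) :=
    congrArg SetLike.coe (MonoidHom.map_mclosure
      (Algebra.TensorProduct.includeRight : A →ₐ[R] B ⊗[R] A).toMonoidHom s).symm
  rw [Algebra.adjoin_eq_span, Algebra.adjoin_eq_span, Submodule.baseChange_span, closure_image]
  rfl

lemma baseChange_eq_top_iff_subsingleton_tensorProduct_quotient {R M : Type*} (B : Type*)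
    [CommRing R] [AddCommGroup M] [Module R M] [Ring B] [Algebra R B] (N : Submodule R M) :
    N.baseChange B = ⊤ ↔ Subsingleton (B ⊗[R] (M ⧸ N)) := by
  rw [Submodule.baseChange, LinearMap.range_eq_top, LinearMap.baseChange_eq_ltensor,
    ← LinearMap.range_eq_top, ← Submodule.Quotient.subsingleton_iff]
  exact (lTensor.equiv B (LinearMap.exact_subtype_mkQ N)
    N.mkQ_surjective).toEquiv.subsingleton_congr

lemma adjoin_one_tmul_image_eq_top_iff {R A : Type*} (B : Type*) [CommRing R] [Ring A] [Algebra R A]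
    [CommRing B] [Algebra R B] (s : Set A) :
    Algebra.adjoin B (((1 : B) ⊗ₜ[R] ·) '' s) = ⊤ ↔
      Subsingleton (B ⊗[R] (A ⧸ Subalgebra.toSubmodule (Algebra.adjoin R s))) := by
  rw [← Algebra.toSubmodule_eq_top, toSubmodule_adjoin_one_tmul_image,
    baseChange_eq_top_iff_subsingleton_tensorProduct_quotient]

lemma subsingleton_tensorProduct_of_algHom {R B C : Type*} (M : Type*) [CommSemiring R]
    [AddCommMonoid M] [Module R M] [CommSemiring B] [Algebra R B] [CommSemiring C] [Algebra R C]
    (φ : B →ₐ[R] C) [Subsingleton (B ⊗[R] M)] : Subsingleton (C ⊗[R] M) := by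
  algebraize [φ.toRingHom]
  have : IsScalarTower R B C := .of_algHom φ
  exact (AlgebraTensorModule.cancelBaseChange R B B C M).symm.subsingleton

section Vanishing

variable {R : Type*} [CommRing R] (M : Type*) [AddCommGroup M] [Module R M]

lemma subsingleton_quotient_tensorProduct_of_localization (S : Submonoid R) (m : Ideal R)
    [m.IsMaximal] (hS : Disjoint (S : Set R) m) [Subsingleton (Localization S ⊗[R] M)] :
    Subsingleton ((R ⧸ m) ⊗[R] M) := by
  let := Ideal.Quotient.field m
  have isUnit_mk (x : S) : IsUnit (Algebra.ofId R (R ⧸ m) x) :=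
    isUnit_iff_ne_zero.2 fun hx ↦
      Set.disjoint_left.1 hS x.2 (Ideal.Quotient.eq_zero_iff_mem.1 hx)
  exact subsingleton_tensorProduct_of_algHom M
    (IsLocalization.liftAlgHom (S := Localization S) isUnit_mk)

lemma subsingleton_of_forall_isMaximal_quotient_tensorProduct [Module.Finite R M]
    (h : ∀ (m : Ideal R) [m.IsMaximal], Subsingleton ((R ⧸ m) ⊗[R] M)) : Subsingleton M := by
  rw [← Module.support_eq_empty_iff (R := R), Set.eq_empty_iff_forall_notMem]
  intro p hp
  obtain ⟨m, hm, hpm⟩ := p.asIdeal.exists_le_maximal p.isPrime.ne_top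
  have nontrivial_fiber : Nontrivial (m.ResidueField ⊗[R] M) :=
    (Module.mem_support_iff_nontrivial_residueField_tensorProduct ⟨m, hm.isPrime⟩).1
      (Module.mem_support_mono hpm hp)
  have := h m
  exact not_subsingleton _ (subsingleton_tensorProduct_of_algHom M
    (IsScalarTower.toAlgHom R (R ⧸ m) m.ResidueField))

theorem subsingleton_tfae_localization_quotient [Module.Finite R M] :
    List.TFAE
      [ Subsingleton M,
        ∃ (n : ℕ) (f : Fin n → R), Ideal.span (Set.range f) = ⊤ ∧
          ∀ i, Subsingleton (Localization.Away (f i) ⊗[R] M),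
        ∀ (m : Ideal R) [m.IsMaximal], Subsingleton (Localization.AtPrime m ⊗[R] M),
        ∀ (m : Ideal R) [m.IsMaximal], Subsingleton ((R ⧸ m) ⊗[R] M) ] := by
  tfae_have 1 → 2 := fun _ ↦ ⟨1, fun _ ↦ 1, by simp, fun _ ↦ inferInstance⟩
  tfae_have 1 → 3 := fun _ _ _ ↦ inferInstance
  tfae_have 2 → 4 := by
    rintro ⟨n, f, hf, hM⟩ m hm
    obtain ⟨i, hi⟩ : ∃ i, f i ∉ m := by
      by_contra! hfm
      exact hm.ne_top (top_le_iff.1 (hf ▸ Ideal.span_le.2 (Set.range_subset_iff.2 hfm)))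
    have := hM i
    exact subsingleton_quotient_tensorProduct_of_localization M (.powers (f i)) m
      ((m.disjoint_powers_iff_notMem_of_isPrime (f i)).2 hi)
  tfae_have 3 → 4 := fun hM m _ ↦
    have := hM m
    subsingleton_quotient_tensorProduct_of_localization M m.primeCompl m disjoint_compl_left
  tfae_have 4 → 1 := subsingleton_of_forall_isMaximal_quotient_tensorProduct M
  tfae_finish

end Vanishing

theorem algebra_generation_is_local_general {R A : Type*} [CommRing R] [Ring A] [Algebra R A]
    (s : Set A) [Module.Finite R (A ⧸ Subalgebra.toSubmodule (Algebra.adjoin R s))] :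
    List.TFAE
      [ Algebra.adjoin R s = ⊤,
        ∃ (n : ℕ) (f : Fin n → R), Ideal.span (Set.range f) = ⊤ ∧
          ∀ i, Algebra.adjoin (Localization.Away (f i))
            (((1 : Localization.Away (f i)) ⊗ₜ[R] ·) '' s) = ⊤,
        ∀ (m : Ideal R) [m.IsMaximal],
          Algebra.adjoin (Localization.AtPrime m)
            (((1 : Localization.AtPrime m) ⊗ₜ[R] ·) '' s) = ⊤,
        ∀ (m : Ideal R) [m.IsMaximal],
          Algebra.adjoin (R ⧸ m) (((1 : R ⧸ m) ⊗ₜ[R] ·) '' s) = ⊤ ] := by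
  simp only [adjoin_one_tmul_image_eq_top_iff]
  rw [← Algebra.toSubmodule_eq_top, ← Submodule.Quotient.subsingleton_iff]
  exact subsingleton_tfae_localization_quotient _

/-- For a commutative ring `R`, a commutative `R`-algebra `A` that is
finitely generated as an `R`-module, and elements `a 1, …, a r` of `A`, the following are
equivalent: (1) the `aᵢ` generate `A` as an `R`-algebra; (2) there are `f₁, …, f_m ∈ R`
generating the unit ideal such that the images of the `aᵢ` generate each localization
`A_{fᵢ}` over `R_{fᵢ}`; (3) for every maximal ideal `m`, the images of the `aᵢ` generate
`A_m` over `R_m`; (4) for every maximal ideal `m`, the images of the `aᵢ` generate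
`A ⊗_R k(m)` over the residue field `k(m)`. (Localizations and residue-field fibers are
realized as base changes `R_{fᵢ} ⊗[R] A`, `R_m ⊗[R] A` and `(R/m) ⊗[R] A`.) -/
theorem algebra_generation_is_local
    (R A : Type u) [CommRing R] [CommRing A] [Algebra R A] [Module.Finite R A]
    (r : ℕ) (a : Fin r → A) :
    List.TFAE
      [ Algebra.adjoin R (Set.range a) = ⊤,
        ∃ (m : ℕ) (f : Fin m → R), Ideal.span (Set.range f) = ⊤ ∧
          ∀ i, Algebra.adjoin (Localization.Away (f i))
            (Set.range fun j => ((1 : Localization.Away (f i)) ⊗ₜ[R] a j :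
              Localization.Away (f i) ⊗[R] A)) = ⊤,
        ∀ (m : Ideal R) [m.IsMaximal],
          Algebra.adjoin (Localization.AtPrime m)
            (Set.range fun j => ((1 : Localization.AtPrime m) ⊗ₜ[R] a j :
              Localization.AtPrime m ⊗[R] A)) = ⊤,
        ∀ (m : Ideal R) [m.IsMaximal],
          Algebra.adjoin (R ⧸ m)
            (Set.range fun j => ((1 : R ⧸ m) ⊗ₜ[R] a j : (R ⧸ m) ⊗[R] A)) = ⊤ ] := by
  simpa only [← Set.range_comp'] using algebra_generation_is_local_general (R := R) (Set.range a)
end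

section
/- Let R be a commutative local ring, let n ≥ 2 and r ≥ 1, and let a_1, …, a_r be elements of R^n, writing a_{ki} for the i-th component of a_k. Then the following are equivalent: (i) the set {a_1, …, a_r} generates R^n as an R-algebra; (ii) for every pair of indices (i, j) with 1 ≤ i < j ≤ n, there exists k ∈ {1, …, r} such that a_{ki} − a_{kj} is a unit of R. -/
/-!
If the differences `x i - x j` of the generators all lie in a proper ideal `I`, then the `i`-th and
`j`-th coordinates modulo `I` are algebra maps that agree on the generated subalgebra, so it misses
`Pi.single i 1`. Conversely, the values at `i` of the elements of the subalgebra vanishing at `j`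
form an ideal containing all differences `x i - x j`. If these generate the unit ideal, the
subalgebra contains an element equal to `1` at `i` and `0` at `j`, and multiplying over `j ≠ i`
gives `Pi.single i 1`. Over a local ring, a set generates the unit ideal if and only if it
contains a unit.
-/

section CommSemiring

variable {R ι : Type*} [CommSemiring R]

theorem subalgebra_pi_eq_top_iff_forall_single_mem [Finite ι] [DecidableEq ι]
    {A : Subalgebra R (ι → R)} : A = ⊤ ↔ ∀ i, Pi.single i 1 ∈ A := by
  cases nonempty_fintype ι
  refine ⟨fun h i ↦ h ▸ Algebra.mem_top, fun h ↦ eq_top_iff.2 fun x _ ↦ ?_⟩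
  rw [pi_eq_sum_univ' x]
  exact sum_mem fun i _ ↦ A.smul_mem (h i) (x i)

theorem subalgebra_pi_eq_top_of_pairwise_exists_eq_one_eq_zero [Finite ι]
    {A : Subalgebra R (ι → R)} (hA : Pairwise fun i j ↦ ∃ e ∈ A, e i = 1 ∧ e j = 0) : A = ⊤ := by
  classical
  cases nonempty_fintype ι
  refine subalgebra_pi_eq_top_iff_forall_single_mem.2 fun i ↦ ?_
  choose! e heA hei hej using fun j (hij : i ≠ j) ↦ hA hij
  have single_eq_prod : Pi.single i 1 = ∏ j ∈ Finset.univ.erase i, e j := by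
    ext l
    rw [Finset.prod_apply]
    obtain rfl | hil := eq_or_ne i l
    · rw [Pi.single_eq_same, Finset.prod_eq_one fun j hj ↦ hei j (Finset.ne_of_mem_erase hj).symm]
    · rw [Pi.single_eq_of_ne hil.symm]
      exact .symm <|
        Finset.prod_eq_zero (Finset.mem_erase.2 ⟨hil.symm, Finset.mem_univ l⟩) (hej l hil)
  rw [single_eq_prod]
  exact prod_mem fun j hj ↦ heA j (Finset.ne_of_mem_erase hj).symm

theorem ideal_span_eq_top_iff_exists_isUnit [IsLocalRing R] {t : Set R} :
    Ideal.span t = ⊤ ↔ ∃ x ∈ t, IsUnit x := by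
  refine ⟨fun ht ↦ ?_, fun ⟨x, hx, hux⟩ ↦ Ideal.eq_top_of_isUnit_mem _ (Ideal.subset_span hx) hux⟩
  by_contra! hnonunits
  have span_le : Ideal.span t ≤ IsLocalRing.maximalIdeal R := Ideal.span_le.2 hnonunits
  exact (IsLocalRing.maximalIdeal.isMaximal R).ne_top (top_le_iff.1 (ht ▸ span_le))

end CommSemiring

section CommRing

variable {R ι : Type*} [CommRing R] {s : Set (ι → R)} {i j : ι}

theorem span_image_sub_eq_top_of_adjoin_eq_top (hs : Algebra.adjoin R s = ⊤) (hij : i ≠ j) :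
    Ideal.span ((fun x ↦ x i - x j) '' s) = ⊤ := by
  classical
  set I := Ideal.span ((fun x ↦ x i - x j) '' s)
  let coordMod (l : ι) : (ι → R) →ₐ[R] R ⧸ I :=
    (Ideal.Quotient.mkₐ R I).comp (Pi.evalAlgHom R (fun _ ↦ R) l)
  have coordMod_eq : coordMod i = coordMod j := AlgHom.ext_of_adjoin_eq_top hs fun x hx ↦
    Ideal.Quotient.eq.2 (Ideal.subset_span (Set.mem_image_of_mem _ hx))
  have single_sub_mem : (Pi.single i 1 : ι → R) i - (Pi.single i 1 : ι → R) j ∈ I :=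
    Ideal.Quotient.eq.1 (DFunLike.congr_fun coordMod_eq (Pi.single i 1))
  rw [Pi.single_eq_same, Pi.single_eq_of_ne hij.symm, sub_zero] at single_sub_mem
  exact I.eq_top_of_isUnit_mem single_sub_mem isUnit_one

theorem exists_mem_adjoin_eq_one_eq_zero (h : Ideal.span ((fun x ↦ x i - x j) '' s) = ⊤) :
    ∃ e ∈ Algebra.adjoin R s, e i = 1 ∧ e j = 0 := by
  let valuesVanishingAt : Ideal R :=
    ((Algebra.adjoin R s).toSubmodule ⊓ LinearMap.ker (LinearMap.proj j)).map (LinearMap.proj i)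
  have span_le : Ideal.span ((fun x ↦ x i - x j) '' s) ≤ valuesVanishingAt := by
    rw [Ideal.span_le]
    rintro _ ⟨x, hx, rfl⟩
    refine ⟨x - algebraMap R (ι → R) (x j), ⟨?_, ?_⟩, ?_⟩
    · exact sub_mem (Algebra.subset_adjoin hx) (Subalgebra.algebraMap_mem _ _)
    · simp
    · simp
  obtain ⟨e, ⟨heA, hej⟩, hei⟩ := span_le (h ▸ Submodule.mem_top : (1 : R) ∈ _)
  exact ⟨e, heA, hei, hej⟩

theorem adjoin_eq_top_iff_pairwise_span_image_sub_eq_top [Finite ι] :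
    Algebra.adjoin R s = ⊤ ↔ Pairwise fun i j ↦ Ideal.span ((fun x ↦ x i - x j) '' s) = ⊤ :=
  ⟨fun hs _ _ hij ↦ span_image_sub_eq_top_of_adjoin_eq_top hs hij, fun h ↦
    subalgebra_pi_eq_top_of_pairwise_exists_eq_one_eq_zero fun _ _ hij ↦
      exists_mem_adjoin_eq_one_eq_zero (h hij)⟩

theorem symm_exists_isUnit_sub (s : Set (ι → R)) : Std.Symm fun i j ↦ ∃ x ∈ s, IsUnit (x i - x j) :=
  ⟨fun _ _ ⟨x, hx, hux⟩ ↦ ⟨x, hx, IsUnit.sub_iff.1 hux⟩⟩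

theorem generation_of_trivial_algebra_over_local_ring_general [IsLocalRing R] [Finite ι] :
    Algebra.adjoin R s = ⊤ ↔ Pairwise fun i j ↦ ∃ x ∈ s, IsUnit (x i - x j) := by
  simp only [adjoin_eq_top_iff_pairwise_span_image_sub_eq_top, ideal_span_eq_top_iff_exists_isUnit,
    Set.exists_mem_image]

end CommRing

/-- Over a commutative local ring `R`, with `n ≥ 2` and `r ≥ 1`, a tuple
`a 1, …, a r ∈ Rⁿ` generates the product algebra `Rⁿ` as an `R`-algebra if and only if for
every pair of indices `i < j` there is some `k` with `a k i − a k j` a unit of `R`. -/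
theorem generation_of_trivial_algebra_over_local_ring
    (R : Type u) [CommRing R] [IsLocalRing R] (n r : ℕ) (hn : 2 ≤ n) (hr : 1 ≤ r)
    (a : Fin r → (Fin n → R)) :
    Algebra.adjoin R (Set.range a) = (⊤ : Subalgebra R (Fin n → R)) ↔
      ∀ i j : Fin n, i < j → ∃ k : Fin r, IsUnit (a k i - a k j) := by
  have := symm_exists_isUnit_sub (Set.range a)
  simpa only [Set.exists_range_iff] using
    (generation_of_trivial_algebra_over_local_ring_general (s := Set.range a)).trans pairwise_iff_lt
end

section
/- Let R be a commutative ring, let n ≥ 2 and r ≥ 1, and let a_1, …, a_r be elements of R^n, writing a_{ki} for the i-th component of a_k. Then the set {a_1, …, a_r} generates R^n as an R-algebra if and only if, for every pair of indices i ≠ j in {1, …, n}, the ideal of R generated by the r elements a_{1i} − a_{1j}, a_{2i} − a_{2j}, …, a_{ri} − a_{rj} is the unit ideal. -/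
/-!
Two characters `f, g : A →ₐ[R] R` agree on `R[s]` modulo the ideal `I` generated by the
differences `f x - g x` with `x ∈ s`; conversely, the values `f x` at the `x ∈ R[s]` with `g x = 0`
form an ideal containing `I`. So `I = R` exactly when some `e ∈ R[s]` has `f e = 1` and `g e = 0`.
For the coordinate projections of `R^n`, multiplying such elements for a fixed `i` and all `j ≠ i`
gives the `i`-th standard idempotent.
-/

section CharacterDifferences

variable {R A : Type*} [CommRing R] [Ring A] [Algebra R A]

theorem sub_mem_span_image_sub_of_mem_adjoin {B : Type*} [CommRing B] [Algebra R B]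
    (f g : A →ₐ[R] B) {s : Set A} {x : A} (hx : x ∈ Algebra.adjoin R s) :
    f x - g x ∈ Ideal.span ((fun y => f y - g y) '' s) := by
  let π := Ideal.Quotient.mkₐ R (Ideal.span ((fun y => f y - g y) '' s))
  have agree_on_generators : Set.EqOn (π.comp f) (π.comp g) s := fun y hy =>
    Ideal.Quotient.eq.mpr (Ideal.subset_span (Set.mem_image_of_mem _ hy))
  exact Ideal.Quotient.eq.mp (AlgHom.adjoin_le_equalizer _ _ agree_on_generators hx)

theorem span_image_sub_le_map_ker (f g : A →ₐ[R] R) (S : Subalgebra R A) :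
    Ideal.span ((fun x => f x - g x) '' S) ≤
      (Subalgebra.toSubmodule S ⊓ LinearMap.ker g.toLinearMap).map f.toLinearMap := by
  refine Ideal.span_le.mpr ?_
  rintro _ ⟨x, hx, rfl⟩
  exact ⟨x - algebraMap R A (g x), ⟨S.sub_mem hx (S.algebraMap_mem _), by simp⟩, by simp⟩

theorem span_image_sub_eq_top_iff (f g : A →ₐ[R] R) (s : Set A) :
    Ideal.span ((fun x => f x - g x) '' s) = ⊤ ↔
      ∃ e ∈ Algebra.adjoin R s, f e = 1 ∧ g e = 0 := by
  rw [Ideal.eq_top_iff_one]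
  constructor
  · intro one_mem
    have one_mem_adjoin := Ideal.span_mono (Set.image_mono (Algebra.subset_adjoin (R := R))) one_mem
    obtain ⟨e, ⟨he, hge⟩, hfe⟩ := span_image_sub_le_map_ker f g _ one_mem_adjoin
    exact ⟨e, he, hfe, hge⟩
  · rintro ⟨e, he, hfe, hge⟩
    simpa only [hfe, hge, sub_zero] using sub_mem_span_image_sub_of_mem_adjoin f g he

end CharacterDifferences

section PiSubalgebra

variable {R ι : Type*} [CommSemiring R]

theorem single_one_mem_of_forall_ne_exists [Finite ι] [DecidableEq ι]
    {S : Subalgebra R (ι → R)} {i : ι} (h : ∀ j, i ≠ j → ∃ e ∈ S, e i = 1 ∧ e j = 0) :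
    Pi.single i 1 ∈ S := by
  have := Fintype.ofFinite ι
  choose! e he he_one he_zero using h
  have prod_eq_single : ∏ j ∈ Finset.univ.erase i, e j = Pi.single i 1 := by
    funext l
    rw [Finset.prod_apply]
    obtain rfl | hl := eq_or_ne l i
    · rw [Pi.single_eq_same]
      exact Finset.prod_eq_one fun j hj => he_one j (Finset.ne_of_mem_erase hj).symm
    · rw [Pi.single_eq_of_ne hl]
      exact Finset.prod_eq_zero (Finset.mem_erase.mpr ⟨hl, Finset.mem_univ l⟩) (he_zero l hl.symm)
  rw [← prod_eq_single]
  exact S.prod_mem fun j hj => he j (Finset.ne_of_mem_erase hj).symm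

theorem subalgebra_pi_eq_top_iff_single_one_mem [Finite ι] [DecidableEq ι]
    {S : Subalgebra R (ι → R)} : S = ⊤ ↔ ∀ i, Pi.single i 1 ∈ S := by
  refine ⟨fun h i => h ▸ Algebra.mem_top, fun h => ?_⟩
  rw [← Algebra.toSubmodule_eq_top, eq_top_iff, ← (Pi.basisFun R ι).span_eq, Submodule.span_le]
  rintro _ ⟨i, rfl⟩
  simpa only [Pi.basisFun_apply, SetLike.mem_coe, Subalgebra.mem_toSubmodule] using h i

theorem subalgebra_pi_eq_top_iff_forall_ne_exists [Finite ι] {S : Subalgebra R (ι → R)} :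
    S = ⊤ ↔ ∀ i j, i ≠ j → ∃ e ∈ S, e i = 1 ∧ e j = 0 := by
  classical
  rw [subalgebra_pi_eq_top_iff_single_one_mem]
  refine ⟨fun h i j hij => ?_, fun h i => single_one_mem_of_forall_ne_exists (h i)⟩
  exact ⟨Pi.single i 1, h i, Pi.single_eq_same i 1, Pi.single_eq_of_ne hij.symm 1⟩

end PiSubalgebra

theorem generation_of_trivial_algebra_general {R ι κ : Type*} [CommRing R] [Finite ι]
    (a : κ → ι → R) :
    Algebra.adjoin R (Set.range a) = ⊤ ↔
      ∀ i j, i ≠ j → Ideal.span (Set.range fun k => a k i - a k j) = ⊤ := by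
  rw [subalgebra_pi_eq_top_iff_forall_ne_exists]
  refine forall₃_congr fun i j _ => ?_
  have span_iff := span_image_sub_eq_top_iff (Pi.evalAlgHom R (fun _ => R) i)
    (Pi.evalAlgHom R (fun _ => R) j) (Set.range a)
  rw [← Set.range_comp] at span_iff
  exact span_iff.symm

/-- Over a commutative ring `R`, with `n ≥ 2` and `r ≥ 1`, a tuple
`a 1, …, a r ∈ Rⁿ` generates the product algebra `Rⁿ` as an `R`-algebra if and only if for
every pair of distinct indices `i ≠ j`, the ideal of `R` generated by the `r` elements
`a k i − a k j` (for `k = 1, …, r`) is the unit ideal. -/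
theorem generation_of_trivial_algebra
    (R : Type u) [CommRing R] (n r : ℕ) (hn : 2 ≤ n) (hr : 1 ≤ r)
    (a : Fin r → (Fin n → R)) :
    Algebra.adjoin R (Set.range a) = (⊤ : Subalgebra R (Fin n → R)) ↔
      ∀ i j : Fin n, i ≠ j →
        Ideal.span (Set.range fun k : Fin r => a k i - a k j) = (⊤ : Ideal R) :=
  generation_of_trivial_algebra_general a
end

section
/- Let n ≥ 1 and let R be a nonzero commutative ring whose only idempotent elements are 0 and 1. Then for every R-algebra automorphism φ of the product R-algebra R^n there exists a unique permutation σ of {1, …, n} such that φ(x_1, …, x_n) = (x_{σ(1)}, …, x_{σ(n)}) for all (x_1, …, x_n) ∈ R^n; consequently the group of R-algebra automorphisms of R^n is isomorphic to the symmetric group S_n. -/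
/-!
Let `φ` be an automorphism and write `e_j` for the `j`-th standard idempotent of `ι → R`, so that
`x * e_j = x j • e_j`. Some coordinate `k` of `φ e_j` is nonzero, hence equal to `1` since `R` is
connected, and applying `φ` to this identity gives `φ x k = x j` for all `x`. Thus every coordinate
of `x` occurs as a coordinate of `φ x` and, by the same argument for `φ⁻¹`, conversely. As distinct
coordinates are distinct functions of `x`, these two correspondences are mutually inverse.
-/

theorem pi_eval_injective {α β : Type*} [Nontrivial β] :
    Function.Injective (Function.eval : α → (α → β) → β) := by
  classical
  intro a b h
  obtain ⟨y, z, hyz⟩ := exists_pair_ne β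
  by_contra hab
  have hval := congrFun h (Function.update (fun _ => y) a z)
  rw [Function.eval, Function.eval, Function.update_self,
    Function.update_of_ne (Ne.symm hab)] at hval
  exact hyz hval.symm

section PiAlgebra

variable {R ι κ : Type*} [CommSemiring R]

section AlgHom

variable {S : Type*} [Semiring S] [Algebra R S]

theorem algHom_pi_apply_of_map_single_eq_one [DecidableEq ι] (φ : (ι → R) →ₐ[R] S) {j : ι}
    (hj : φ (Pi.single j 1) = 1) (x : ι → R) : φ x = algebraMap R S (x j) := by
  have hx : x * Pi.single j 1 = x j • Pi.single j 1 := by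
    rw [← Pi.single_mul_right, ← Pi.single_smul, smul_eq_mul]
  calc
    φ x = φ (x * Pi.single j 1) := by rw [map_mul, hj, mul_one]
    _ = x j • φ (Pi.single j 1) := by rw [hx, map_smul]
    _ = algebraMap R S (x j) := by rw [hj, Algebra.algebraMap_eq_smul_one]

theorem exists_algHom_pi_apply_of_map_single_ne_zero [DecidableEq ι]
    (hS : ∀ e : S, IsIdempotentElem e → e = 0 ∨ e = 1)
    (φ : (ι → R) →ₐ[R] (κ → S)) {j : ι} (hj : φ (Pi.single j 1) ≠ 0) :
    ∃ k, ∀ x, φ x k = algebraMap R S (x j) := by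
  obtain ⟨k, hk⟩ := Function.ne_iff.mp hj
  have hidem : IsIdempotentElem (φ (Pi.single j 1) k) := by
    rw [IsIdempotentElem, ← Pi.mul_apply, ← map_mul, ← Pi.single_mul, one_mul]
  have hone : φ (Pi.single j 1) k = 1 := (hS _ hidem).resolve_left hk
  exact ⟨k, algHom_pi_apply_of_map_single_eq_one ((Pi.evalAlgHom R _ k).comp φ) hone⟩

theorem exists_algHom_pi_apply_of_injective [Nontrivial R]
    (hS : ∀ e : S, IsIdempotentElem e → e = 0 ∨ e = 1) {φ : (ι → R) →ₐ[R] (κ → S)}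
    (hφ : Function.Injective φ) (j : ι) : ∃ k, ∀ x, φ x k = algebraMap R S (x j) := by
  classical
  have hj : φ (Pi.single j 1) ≠ 0 := (map_ne_zero_iff φ hφ).mpr (by simp)
  exact exists_algHom_pi_apply_of_map_single_ne_zero hS φ hj

end AlgHom

theorem existsUnique_equiv_algEquiv_pi_apply_eq [Nontrivial R]
    (hR : ∀ e : R, IsIdempotentElem e → e = 0 ∨ e = 1) (φ : (ι → R) ≃ₐ[R] (κ → R)) :
    ∃! σ : κ ≃ ι, ∀ x k, φ x k = x (σ k) := by
  have hsource (j : ι) : ∃ k, ∀ x, φ x k = x j :=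
    exists_algHom_pi_apply_of_injective hR (φ := φ.toAlgHom) φ.injective j
  have htarget (k : κ) : ∃ j, ∀ y, φ.symm y j = y k :=
    exists_algHom_pi_apply_of_injective hR (φ := φ.symm.toAlgHom) φ.symm.injective k
  choose f hf using hsource
  choose g hg using htarget
  have hφ (x : ι → R) (k : κ) : φ x k = x (g k) := by rw [← hg k (φ x), φ.symm_apply_apply]
  have hfg (k : κ) : f (g k) = k := pi_eval_injective <| funext fun y : κ → R => by
    rw [Function.eval, Function.eval, ← φ.apply_symm_apply y, hf, hφ]
  have hgf (j : ι) : g (f j) = j := pi_eval_injective <| funext fun x : ι → R => by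
    rw [Function.eval, Function.eval, ← hφ x, hf]
  refine ⟨⟨g, f, hfg, hgf⟩, hφ, fun τ hτ => Equiv.ext fun k => ?_⟩
  exact pi_eval_injective <| funext fun x => (hτ x k).symm.trans (hφ x k)

variable (R ι) in
/-- The action of the permutations of `ι` on the `R`-algebra `ι → R`, as a group homomorphism to
its automorphism group. A permutation `σ` acts by `x ↦ x ∘ σ⁻¹`, since `x ↦ x ∘ σ` would reverse
products. -/
def permToAlgAut : Equiv.Perm ι →* ((ι → R) ≃ₐ[R] (ι → R)) where
  toFun σ := AlgEquiv.piCongrLeft' R (fun _ => R) σ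
  map_one' := rfl
  map_mul' _ _ := AlgEquiv.ext fun _ => rfl

theorem permToAlgAut_apply (σ : Equiv.Perm ι) (x : ι → R) (i : ι) :
    permToAlgAut R ι σ x i = x (σ⁻¹ i) :=
  rfl

theorem permToAlgAut_eq_iff {σ : Equiv.Perm ι} {φ : (ι → R) ≃ₐ[R] (ι → R)} :
    permToAlgAut R ι σ = φ ↔ ∀ x i, φ x i = x (σ⁻¹ i) := by
  simp only [eq_comm, AlgEquiv.ext_iff, funext_iff, permToAlgAut_apply]

theorem permToAlgAut_bijective [Nontrivial R]
    (hR : ∀ e : R, IsIdempotentElem e → e = 0 ∨ e = 1) :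
    Function.Bijective (permToAlgAut R ι) := by
  rw [Function.bijective_iff_existsUnique]
  intro φ
  simp only [permToAlgAut_eq_iff]
  exact (Equiv.inv (Equiv.Perm ι)).bijective.existsUnique_iff.mp
    (existsUnique_equiv_algEquiv_pi_apply_eq hR φ)

theorem aut_of_trivial_algebra_is_symmetric_group_general [Nontrivial R]
    (hR : ∀ e : R, IsIdempotentElem e → e = 0 ∨ e = 1) :
    (∀ φ : (ι → R) ≃ₐ[R] (ι → R),
      ∃! σ : Equiv.Perm ι, ∀ (x : ι → R) (i : ι), φ x i = x (σ i)) ∧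
    Nonempty (((ι → R) ≃ₐ[R] (ι → R)) ≃* Equiv.Perm ι) :=
  ⟨existsUnique_equiv_algEquiv_pi_apply_eq hR,
    ⟨(MulEquiv.ofBijective (permToAlgAut R ι) (permToAlgAut_bijective hR)).symm⟩⟩

end PiAlgebra

/-- If `R` is a nonzero commutative ring whose only idempotents are `0`
and `1` (a connected ring), then every `R`-algebra automorphism of the product algebra
`Rⁿ` is given by permuting the coordinates, by a unique permutation; consequently the
automorphism group of `Rⁿ` is isomorphic to the symmetric group `Sₙ`. -/
theorem aut_of_trivial_algebra_is_symmetric_group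
    (R : Type u) [CommRing R] [Nontrivial R]
    (hconn : ∀ e : R, e * e = e → e = 0 ∨ e = 1) (n : ℕ) (hn : 1 ≤ n) :
    (∀ φ : (Fin n → R) ≃ₐ[R] (Fin n → R),
      ∃! σ : Equiv.Perm (Fin n), ∀ (x : Fin n → R) (i : Fin n), φ x i = x (σ i)) ∧
    Nonempty (((Fin n → R) ≃ₐ[R] (Fin n → R)) ≃* Equiv.Perm (Fin n)) :=
  aut_of_trivial_algebra_is_symmetric_group_general hconn
end

section
/- Let k be a field and r ≥ 1. In the polynomial ring S = k[a_1, …, a_r, b_1, …, b_r], let Q = a_1b_1 + ⋯ + a_rb_r. If p ∈ S is a polynomial such that the product (Q − 1)·p is homogeneous with respect to the standard grading (in which each variable a_i and b_i has degree 1), then p = 0. In other words, the only homogeneous element of the ideal generated by Q − 1 is 0. -/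
open MvPolynomial

/-!
If `p ≠ 0` has lowest component `p_l` and highest component `p_h`, and `Q` is homogeneous of
degree `n > 0` and not a zero divisor, then `(Q - 1) * p` has the nonzero components `-p_l` in
degree `l` and `Q * p_h` in degree `n + h > l`, so it is not homogeneous.
-/

section GradedRing

open DirectSum

variable {ι A σ : Type*} [DecidableEq ι] [SetLike σ A]

theorem eq_of_mem_of_coe_decompose_ne_zero [AddCommMonoid A] [AddSubmonoidClass σ A]
    (𝒜 : ι → σ) [Decomposition 𝒜] {a : A} {i d : ι}
    (ha : a ∈ 𝒜 d) (hi : (decompose 𝒜 a i : A) ≠ 0) : i = d := by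
  contrapose! hi
  exact decompose_of_mem_ne 𝒜 ha hi.symm

theorem coe_decompose_mul_eq_zero_of_left_mem [AddMonoid ι] [Semiring A] [AddSubmonoidClass σ A]
    (𝒜 : ι → σ) [GradedRing 𝒜] {a b : A} {n i : ι} (ha : a ∈ 𝒜 n)
    (hb : ∀ j, n + j = i → (decompose 𝒜 b j : A) = 0) :
    (decompose 𝒜 (a * b) i : A) = 0 := by
  classical
  rw [← sum_support_decompose 𝒜 b, Finset.mul_sum, decompose_sum, DFinsupp.finsetSum_apply,
    AddSubmonoidClass.coe_finsetSum]
  refine Finset.sum_eq_zero fun j _ ↦ ?_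
  by_cases hij : n + j = i
  · rw [hb j hij, mul_zero, decompose_zero, DirectSum.zero_apply, ZeroMemClass.coe_zero]
  · exact decompose_of_mem_ne 𝒜 (SetLike.mul_mem_graded ha (SetLike.coe_mem _)) hij

theorem coe_decompose_sub_one_mul [AddMonoid ι] [Ring A] [AddSubgroupClass σ A]
    (𝒜 : ι → σ) [GradedRing 𝒜] (a b : A) (i : ι) :
    (decompose 𝒜 ((a - 1) * b) i : A) = decompose 𝒜 (a * b) i - decompose 𝒜 b i := by
  rw [sub_one_mul, decompose_sub, DirectSum.sub_apply, AddSubgroupClass.coe_sub]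

end GradedRing

section OrderedGrading

open DirectSum

variable {ι A σ : Type*} [AddCancelCommMonoid ι] [LinearOrder ι] [IsOrderedAddMonoid ι] [Ring A]
  [SetLike σ A] [AddSubgroupClass σ A] (𝒜 : ι → σ) [GradedRing 𝒜] {Q p : A} {n d i : ι}

theorem coe_decompose_sub_one_mul_of_lowest (hn : 0 < n) (hQ : Q ∈ 𝒜 n)
    (hlow : ∀ j < i, (decompose 𝒜 p j : A) = 0) :
    (decompose 𝒜 ((Q - 1) * p) i : A) = -decompose 𝒜 p i := by
  have hQp : (decompose 𝒜 (Q * p) i : A) = 0 :=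
    coe_decompose_mul_eq_zero_of_left_mem 𝒜 hQ fun j hj ↦ hlow j (hj ▸ lt_add_of_pos_left j hn)
  rw [coe_decompose_sub_one_mul, hQp, zero_sub]

theorem coe_decompose_sub_one_mul_of_highest (hn : 0 < n) (hQ : Q ∈ 𝒜 n)
    (hhigh : ∀ j > i, (decompose 𝒜 p j : A) = 0) :
    (decompose 𝒜 ((Q - 1) * p) (n + i) : A) = Q * decompose 𝒜 p i := by
  rw [coe_decompose_sub_one_mul, coe_decompose_mul_add_of_left_mem 𝒜 hQ,
    hhigh _ (lt_add_of_pos_left i hn), sub_zero]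

theorem eq_zero_of_sub_one_mul_mem (hn : 0 < n) (hQ : Q ∈ 𝒜 n)
    (hreg : Q ∈ nonZeroDivisorsLeft A) (hp : (Q - 1) * p ∈ 𝒜 d) : p = 0 := by
  classical
  by_contra hp0
  have hne : (decompose 𝒜 p).support.Nonempty := by
    rw [Finset.nonempty_iff_ne_empty, ne_eq, DFinsupp.support_eq_empty]
    exact fun h0 ↦ hp0 ((decompose 𝒜).injective (h0.trans (decompose_zero 𝒜).symm))
  set l := (decompose 𝒜 p).support.min' hne
  set h := (decompose 𝒜 p).support.max' hne
  have hl : (decompose 𝒜 p l : A) ≠ 0 := by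
    simpa using (decompose 𝒜 p).support.min'_mem hne
  have hh : (decompose 𝒜 p h : A) ≠ 0 := by
    simpa using (decompose 𝒜 p).support.max'_mem hne
  have hlow : ∀ j < l, (decompose 𝒜 p j : A) = 0 := fun j hj ↦ by
    simpa using mt (Finset.min'_le _ j) hj.not_ge
  have hhigh : ∀ j > h, (decompose 𝒜 p j : A) = 0 := fun j hj ↦ by
    simpa using mt (Finset.le_max' _ j) hj.not_ge
  have hld : l = d := eq_of_mem_of_coe_decompose_ne_zero 𝒜 hp <| by
    rwa [coe_decompose_sub_one_mul_of_lowest 𝒜 hn hQ hlow, neg_ne_zero]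
  have hhd : n + h = d := eq_of_mem_of_coe_decompose_ne_zero 𝒜 hp <| by
    rw [coe_decompose_sub_one_mul_of_highest 𝒜 hn hQ hhigh]
    exact fun h0 ↦ hh (hreg _ h0)
  have hlt : l < n + h := (Finset.min'_le_max' _ hne).trans_lt (lt_add_of_pos_left h hn)
  exact hlt.ne (hld.trans hhd.symm)

end OrderedGrading

section MvPolynomial

open scoped nonZeroDivisors

theorem mem_nonZeroDivisors_of_forall_coeff_mem {σ R : Type*} [CommSemiring R]
    {f : MvPolynomial σ R} (hf : f ≠ 0) (hcoeff : ∀ m ∈ f.support, coeff m f ∈ R⁰) :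
    f ∈ (MvPolynomial σ R)⁰ := by
  obtain ⟨_, _⟩ := exists_wellFoundedGT σ
  exact MonomialOrder.lex.mem_nonZeroDivisors_of_leadingCoeff_mem_nonZeroDivisors
    (hcoeff _ (MonomialOrder.lex.degree_mem_support hf))

theorem sum_monomial_mem_nonZeroDivisors {ι σ R : Type*} [CommSemiring R] {s : Finset ι}
    (hs : s.Nonempty) {e : ι → σ →₀ ℕ} (he : Set.InjOn e s) {c : ι → R} (hc : ∀ i ∈ s, c i ∈ R⁰) :
    ∑ i ∈ s, monomial (e i) (c i) ∈ (MvPolynomial σ R)⁰ := by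
  classical
  nontriviality R
  have hcoeff : ∀ i ∈ s, coeff (e i) (∑ j ∈ s, monomial (e j) (c j)) = c i := fun i hi ↦ by
    rw [coeff_sum, Finset.sum_eq_single_of_mem i hi, coeff_monomial, if_pos rfl]
    exact fun j hj hji ↦ by rw [coeff_monomial, if_neg (mt (he hj hi) hji)]
  refine mem_nonZeroDivisors_of_forall_coeff_mem ?_ fun m hm ↦ ?_
  · obtain ⟨i, hi⟩ := hs
    refine ne_zero_iff.mpr ⟨e i, ?_⟩
    rw [hcoeff i hi]
    exact nonZeroDivisors.ne_zero (hc i hi)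
  · obtain ⟨i, hi, hmi⟩ := Finset.mem_biUnion.mp (support_sum hm)
    obtain rfl : m = e i := Finset.mem_singleton.mp (support_monomial_subset hmi)
    rw [hcoeff i hi]
    exact hc i hi

variable (R ι : Type*) [CommSemiring R] [Fintype ι]

theorem isHomogeneous_sum_X_inl_mul_X_inr :
    (∑ i : ι, X (Sum.inl i) * X (Sum.inr i) : MvPolynomial (ι ⊕ ι) R).IsHomogeneous 2 :=
  IsHomogeneous.sum _ _ _ fun _ _ ↦ (isHomogeneous_X R _).mul (isHomogeneous_X R _)

theorem sum_X_inl_mul_X_inr_mem_nonZeroDivisors [Nonempty ι] :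
    ∑ i : ι, X (Sum.inl i) * X (Sum.inr i) ∈ (MvPolynomial (ι ⊕ ι) R)⁰ := by
  classical
  have hinj : Function.Injective fun i : ι ↦
      (Finsupp.single (Sum.inl i) 1 + Finsupp.single (Sum.inr i) 1 : ι ⊕ ι →₀ ℕ) := fun i j hij ↦ by
    simpa [Finsupp.single_apply] using DFunLike.congr_fun hij (Sum.inl j)
  simpa [X, monomial_mul] using sum_monomial_mem_nonZeroDivisors (R := R) Finset.univ_nonempty
    hinj.injOn fun _ _ ↦ one_mem R⁰

end MvPolynomial

theorem no_nonzero_homogeneous_multiple_of_Q_sub_one_general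
    {R ι : Type*} [CommRing R] [Fintype ι] [Nonempty ι] {p : MvPolynomial (ι ⊕ ι) R} {d : ℕ}
    (hp : (((∑ i : ι, X (Sum.inl i) * X (Sum.inr i)) - 1) * p).IsHomogeneous d) :
    p = 0 :=
  letI := gradedAlgebra (σ := ι ⊕ ι) (R := R)
  eq_zero_of_sub_one_mul_mem (homogeneousSubmodule (ι ⊕ ι) R) two_pos
    (isHomogeneous_sum_X_inl_mul_X_inr R ι) (sum_X_inl_mul_X_inr_mem_nonZeroDivisors R ι).1 hp

/-- Let `k` be a field, `r ≥ 1`, and in `S = k[a₁,…,a_r,b₁,…,b_r]` (the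
`a`s indexed by `Sum.inl`, the `b`s by `Sum.inr`) let `Q = a₁b₁ + ⋯ + a_rb_r`. If
`(Q − 1)·p` is homogeneous for the standard grading, then `p = 0`; that is, the only
homogeneous element of the ideal `(Q − 1)` is `0`. -/
theorem no_nonzero_homogeneous_multiple_of_Q_sub_one
    (k : Type u) [Field k] (r : ℕ) (hr : 1 ≤ r)
    (p : MvPolynomial (Fin r ⊕ Fin r) k)
    (hp : ∃ d : ℕ,
      (((∑ i : Fin r, X (Sum.inl i) * X (Sum.inr i)) - 1) * p).IsHomogeneous d) :
    p = 0 :=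
  have : Nonempty (Fin r) := ⟨⟨0, hr⟩⟩
  no_nonzero_homogeneous_multiple_of_Q_sub_one_general hp.choose_spec
end

section
/- Let r ≥ 1, let S = ℝ[z_1, …, z_r]/(z_1² + ⋯ + z_r² − 1), let σ be the ℝ-algebra automorphism of S determined by σ(z_i) = −z_i for all i, and let R = S^σ be the fixed subring. Then S cannot be generated as an R-algebra by fewer than r elements: for any elements s_1, …, s_{r−1} ∈ S, the smallest R-subalgebra of S containing s_1, …, s_{r−1} is a proper subalgebra of S. -/
open MvPolynomial

/-- The ideal `(z₁² + ⋯ + z_r² − 1)` in `ℝ[z₁,…,z_r]`. -/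
noncomputable abbrev sphereIdeal (r : ℕ) : Ideal (MvPolynomial (Fin r) ℝ) :=
  Ideal.span {(∑ i : Fin r, X i ^ 2) - 1}

/-- The coordinate ring `S = ℝ[z₁,…,z_r]/(Σ zᵢ² − 1)` of the real `(r−1)`-sphere. -/
noncomputable abbrev Sring (r : ℕ) :=
  MvPolynomial (Fin r) ℝ ⧸ sphereIdeal r

/-- The class of `z_i` in `S`. -/
noncomputable abbrev Sz (r : ℕ) (i : Fin r) : Sring r :=
  Ideal.Quotient.mk (sphereIdeal r) (X i)

/-!
A generating set of `n` elements of `S` (with `r = n + 1`) lifts to `n` polynomials, and by a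
polynomial Borsuk–Ulam theorem these agree at two antipodal points `x` and `-x` of the sphere. The
evaluations at `x` and `-x` then agree on the generators and on the fixed ring `R`, hence on `S`,
although the coordinate functions separate `x` from `-x`.

For Borsuk–Ulam it suffices that `n` odd polynomials `f i` have a common zero on the sphere, and by
compactness it suffices to solve `x (i + 1) ^ D + h i x = 0` on the sphere, where `h i = t * f i`
with `t` large and `D` is a large odd number. The leading monomials of these equations and of
`∑ j, x j ^ 2 - 1` are powers of distinct variables, so the reduced monomials are a basis of the
quotient algebra `A`. Precisely `D ^ n` of them have even degree, so the even part of `A` has odd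
dimension and therefore a real point. That point extends to `A`, because one of the odd elements
`x j` has a positive square there.
-/

section OddDimension

variable {C : Type*} [CommRing C] [Algebra ℝ C]

theorem finrank_eq_two_of_isSimpleModule [IsEmpty (C →ₐ[ℝ] ℝ)] (V : Type*) [AddCommGroup V]
    [Module ℝ V] [Module C V] [IsScalarTower ℝ C V] [FiniteDimensional ℝ V] [IsSimpleModule C V] :
    Module.finrank ℝ V = 2 := by
  obtain ⟨I, hI, ⟨e⟩⟩ := isSimpleModule_iff_quot_maximal.1 ‹IsSimpleModule C V›
  let _ : Field (C ⧸ I) := Ideal.Quotient.field I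
  have : FiniteDimensional ℝ (C ⧸ I) := Module.Finite.equiv (e.restrictScalars ℝ)
  rw [(e.restrictScalars ℝ).finrank_eq]
  obtain ⟨⟨f⟩⟩ | ⟨⟨f⟩⟩ := Real.nonempty_algEquiv_or (C ⧸ I)
  · exact isEmptyElim (f.toAlgHom.comp (Ideal.Quotient.mkₐ ℝ I))
  · rw [f.toLinearEquiv.finrank_eq, Complex.finrank_real_complex]

theorem even_finrank_of_isEmpty_algHom [IsEmpty (C →ₐ[ℝ] ℝ)] (V : Type*) [AddCommGroup V]
    [Module ℝ V] [Module C V] [IsScalarTower ℝ C V] [FiniteDimensional ℝ V] :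
    Even (Module.finrank ℝ V) := by
  induction hk : Module.finrank ℝ V using Nat.strong_induction_on generalizing V with
  | _ k ih =>
    obtain rfl | hpos := k.eq_zero_or_pos
    · exact Even.zero
    have : Nontrivial V := Module.nontrivial_of_finrank_pos (R := ℝ) (hk ▸ hpos)
    have : IsNoetherian C V := isNoetherian_of_tower ℝ inferInstance
    obtain ⟨N, hN, -⟩ := (eq_top_or_exists_le_coatom (⊥ : Submodule C V)).resolve_left bot_ne_top
    have : IsSimpleModule C (V ⧸ N) := isSimpleModule_iff_isCoatom.2 hN
    have : FiniteDimensional ℝ N := inferInstanceAs (FiniteDimensional ℝ (N.restrictScalars ℝ))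
    have hquot : Module.finrank ℝ (V ⧸ N) = 2 := finrank_eq_two_of_isSimpleModule (C := C) _
    have hsum : Module.finrank ℝ (V ⧸ N) + Module.finrank ℝ N = Module.finrank ℝ V :=
      (N.restrictScalars ℝ).finrank_quotient_add_finrank
    rw [← hk, ← hsum, hquot]
    exact even_two.add (ih _ (by lia) N rfl)

theorem nonempty_algHom_of_odd_finrank (h : Odd (Module.finrank ℝ C)) :
    Nonempty (C →ₐ[ℝ] ℝ) := by
  have : FiniteDimensional ℝ C := Module.finite_of_finrank_pos h.pos
  by_contra hC
  rw [not_nonempty_iff] at hC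
  exact Nat.not_even_iff_odd.2 h (even_finrank_of_isEmpty_algHom (C := C) C)

end OddDimension

section FixedSubalgebra

variable {K A : Type*} [CommSemiring K] [CommSemiring A] [Algebra K A]

/-- The subalgebra of elements fixed by `τ`; for an involution `τ`, the even elements. -/
abbrev fixedSubalgebra (τ : A →ₐ[K] A) : Subalgebra K A := AlgHom.equalizer τ (AlgHom.id K A)

theorem eqOn_adjoin_fixedSubalgebra {B : Type*} [Semiring B] [Algebra K B]
    {τ : A →ₐ[K] A} {φ ψ : A →ₐ[K] B} (hτ : φ.comp τ = ψ) {s : Set A}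
    (hs : Set.EqOn φ ψ s) : Set.EqOn φ ψ (Algebra.adjoin (fixedSubalgebra τ) s) := fun a ha => by
  induction ha using Algebra.adjoin_induction with
  | mem a ha => exact hs ha
  | algebraMap c =>
    have hc : τ c = c := c.2
    change φ c = ψ c
    rw [← hτ, AlgHom.comp_apply, hc]
  | add a b _ _ ha hb => rw [map_add, map_add, ha, hb]
  | mul a b _ _ ha hb => rw [map_mul, map_mul, ha, hb]

end FixedSubalgebra

section Involution

variable {K A : Type*} [Field K] [CommRing A] [Algebra K A] {τ : A →ₐ[K] A}

/-- The projection `a ↦ (a + τ a) / 2` of an algebra with involution `τ` onto the fixed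
subalgebra. -/
def fixedProj (hτ : ∀ a, τ (τ a) = a) : A →ₗ[K] fixedSubalgebra τ :=
  LinearMap.codRestrict (Subalgebra.toSubmodule (fixedSubalgebra τ))
    ((2 : K)⁻¹ • (LinearMap.id + τ.toLinearMap)) fun a => by
      change τ ((2 : K)⁻¹ • (a + τ a)) = (2 : K)⁻¹ • (a + τ a)
      rw [map_smul, map_add, hτ, add_comm]

theorem coe_fixedProj (hτ : ∀ a, τ (τ a) = a) (a : A) :
    (fixedProj hτ a : A) = (2 : K)⁻¹ • (a + τ a) := rfl

theorem exists_algHom_extending [NeZero (2 : K)] (hτ : ∀ a, τ (τ a) = a)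
    (χ : fixedSubalgebra τ →ₐ[K] K) {v : A} (hv : τ v = -v) {w : fixedSubalgebra τ}
    (hw : (w : A) = v ^ 2) (hχ : χ w = 1) :
    ∃ ψ : A →ₐ[K] K, ∀ c : fixedSubalgebra τ, ψ c = χ c := by
  -- For `a` with even part `a₀` and odd part `a₁`, this is `a ↦ χ (a₀ + a₁ * v)`.
  let ψ : A →ₗ[K] K := χ.toLinearMap ∘ₗ fixedProj hτ ∘ₗ LinearMap.mulRight K (1 + v)
  have hhalf : algebraMap K A 2⁻¹ * 2 = 1 := by
    rw [← map_ofNat (algebraMap K A) 2, ← map_mul, inv_mul_cancel₀ two_ne_zero, map_one]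
  have hfix (c : fixedSubalgebra τ) : fixedProj hτ (c * (1 + v)) = c := by
    ext
    rw [coe_fixedProj, map_mul, map_add, map_one, hv, show τ c = c from c.2, Algebra.smul_def]
    linear_combination (c : A) * hhalf
  have hmul (a b : A) : fixedProj hτ (a * (1 + v)) * fixedProj hτ (b * (1 + v)) -
      fixedProj hτ (a * b * (1 + v)) =
      fixedProj hτ ((2 : K)⁻¹ • (a - τ a) * b) * (w - 1) := by
    ext
    push_cast
    simp only [coe_fixedProj, map_mul, map_add, map_sub, map_one, hv, hτ, hw, Algebra.smul_def,
      AlgHom.commutes]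
    linear_combination (algebraMap K A 2⁻¹ * (a * b * (1 + v) + τ a * τ b * (1 - v))) * hhalf
  refine ⟨AlgHom.ofLinearMap ψ ?_ fun a b => ?_, fun c => congrArg χ (hfix c)⟩
  · exact (congrArg χ (hfix 1)).trans (map_one χ)
  · have hχmul := congrArg χ (hmul a b)
    rw [map_sub χ, map_mul χ, map_mul χ, map_sub χ, hχ, map_one, sub_self, mul_zero,
      sub_eq_zero] at hχmul
    exact hχmul.symm

theorem finrank_fixedSubalgebra [NeZero (2 : K)] {ι : Type*} (b : Module.Basis ι K A) (s : Set ι)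
    (hs : ∀ i ∈ s, τ (b i) = b i) (hsc : ∀ i ∉ s, τ (b i) = -b i) :
    Module.finrank K (fixedSubalgebra τ) = Nat.card s := by
  have hcoord {i : ι} (hi : i ∉ s) : b.coord i ∘ₗ τ.toLinearMap = -b.coord i := by
    refine b.ext fun j => ?_
    by_cases hj : j ∈ s
    · have hij : j ≠ i := fun h => hi (h ▸ hj)
      simp [hs j hj, Finsupp.single_eq_of_ne' hij]
    · simp [hsc j hj]
  have hspan : Subalgebra.toSubmodule (fixedSubalgebra τ) = Submodule.span K (b '' s) := by
    refine le_antisymm (fun a (ha : τ a = a) => ?_) (Submodule.span_le.2 ?_)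
    · refine b.mem_span_image.2 fun i hi => by_contra fun his => Finsupp.mem_support_iff.1 hi ?_
      have h : b.repr a i = -b.repr a i := by
        simpa [ha] using LinearMap.congr_fun (hcoord his) a
      have h2 : (2 : K) * b.repr a i = 0 := by linear_combination h
      exact (mul_eq_zero.1 h2).resolve_left two_ne_zero
    · rintro _ ⟨i, hi, rfl⟩
      exact hs i hi
  change Module.finrank K (Subalgebra.toSubmodule (fixedSubalgebra τ)) = _
  rw [hspan, Set.image_eq_range]
  exact Module.finrank_eq_nat_card_basis
    (.span (b.linearIndependent.comp ((↑) : s → ι) Subtype.val_injective))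

end Involution

section MonicBasis

open scoped MonomialOrder

variable {σ R : Type*} [CommRing R] {m : MonomialOrder σ}
  {b : (σ →₀ ℕ) → MvPolynomial σ R}

theorem linearIndependent_of_monic_of_degree_eq (hb : ∀ α, m.Monic (b α))
    (hdeg : ∀ α, m.degree (b α) = α) : LinearIndependent R b := by
  refine linearIndependent_iff.2 fun c hc => by_contra fun hne => ?_
  obtain ⟨α, hα, hmax⟩ := c.support.exists_max_image m.toSyn (Finsupp.support_nonempty_iff.2 hne)
  have hlower (β) (hβ : β ∈ c.support) (hβα : β ≠ α) : coeff α (c β • b β) = 0 := by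
    have hlt : β ≺[m] α := (hmax β hβ).lt_of_ne (m.toSyn.injective.ne hβα)
    rw [coeff_smul, m.coeff_eq_zero_of_lt ((hdeg β).symm ▸ hlt), smul_zero]
  have hlead : coeff α (b α) = 1 := by simpa only [hdeg] using (hb α).coeff_degree
  have hcoeff := congrArg (coeff α) hc
  rw [Finsupp.linearCombination_apply, Finsupp.sum, coeff_sum,
    Finset.sum_eq_single_of_mem α hα hlower, coeff_smul, hlead, smul_eq_mul, mul_one,
    coeff_zero] at hcoeff
  exact Finsupp.mem_support_iff.1 hα hcoeff

theorem span_range_eq_top_of_monic_of_degree_eq (hb : ∀ α, m.Monic (b α))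
    (hdeg : ∀ α, m.degree (b α) = α) : Submodule.span R (Set.range b) = ⊤ := by
  have hsum (p : MvPolynomial σ R)
      (hp : ∀ α ∈ p.support, monomial α 1 ∈ Submodule.span R (Set.range b)) :
      p ∈ Submodule.span R (Set.range b) := by
    rw [p.as_sum]
    refine Submodule.sum_mem _ fun α hα => ?_
    rw [← mul_one (coeff α p), ← smul_eq_mul, ← smul_monomial]
    exact Submodule.smul_mem _ _ (hp α hα)
  classical
  have hmonomial (α) : monomial α 1 ∈ Submodule.span R (Set.range b) := by
    induction hα : m.toSyn α using WellFoundedLT.induction generalizing α with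
    | _ a ih =>
      subst hα
      have hlower : b α - monomial α 1 ∈ Submodule.span R (Set.range b) := by
        refine hsum _ fun β hβ => ih _ ?_ β rfl
        have hβα : β ≠ α := by
          rintro rfl
          have hlead : coeff β (b β) = 1 := by simpa only [hdeg] using (hb β).coeff_degree
          simp [hlead, coeff_monomial] at hβ
        have hle : β ≼[m] m.degree (b α) :=
          m.le_degree (by simpa [coeff_monomial, hβα.symm] using hβ)
        rw [hdeg] at hle
        exact hle.lt_of_ne (m.toSyn.injective.ne hβα)
      exact (sub_sub_cancel (b α) (monomial α 1)) ▸
        Submodule.sub_mem _ (Submodule.subset_span ⟨α, rfl⟩) hlower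
  exact eq_top_iff.2 fun p _ => hsum p fun α _ => hmonomial α

end MonicBasis

section StandardProduct

variable {σ R : Type*} [Fintype σ] [CommRing R] {m : MonomialOrder σ}
  {g : σ → MvPolynomial σ R} {d : σ → ℕ}

/-- The exponents of the monomials that are divisible by none of the powers `X i ^ d i`. -/
def reducedExponents (d : σ → ℕ) : Set (σ →₀ ℕ) := {α | ∀ i, α i < d i}

/-- The monomial with exponent `α`, with as many factors `X i ^ d i` as possible replaced by `g i`.
When `g i` has leading monomial `X i ^ d i`, these products are a basis of the polynomial ring
adapted to the ideal generated by the `g i`. -/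
noncomputable def standardProduct (g : σ → MvPolynomial σ R) (d : σ → ℕ) (α : σ →₀ ℕ) :
    MvPolynomial σ R :=
  ∏ i, X i ^ (α i % d i) * g i ^ (α i / d i)

theorem standardProduct_of_mem_reducedExponents {α : σ →₀ ℕ} (hα : α ∈ reducedExponents d) :
    standardProduct g d α = monomial α 1 := by
  rw [standardProduct, monomial_eq, C_1, one_mul, α.prod_fintype _ fun i => pow_zero _]
  refine Finset.prod_congr rfl fun i _ => ?_
  rw [Nat.mod_eq_of_lt (hα i), Nat.div_eq_of_lt (hα i), pow_zero, mul_one]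

theorem standardProduct_add_single {i : σ} (hi : 0 < d i) (α : σ →₀ ℕ) :
    standardProduct g d (α + Finsupp.single i (d i)) = g i * standardProduct g d α := by
  classical
  rw [standardProduct, standardProduct, ← Finset.mul_prod_erase _ _ (Finset.mem_univ i),
    ← Finset.mul_prod_erase _ _ (Finset.mem_univ i), ← mul_assoc]
  congr 1
  · rw [Finsupp.add_apply, Finsupp.single_eq_same, Nat.add_mod_right, Nat.add_div_right _ hi,
      pow_succ', mul_left_comm]
  · refine Finset.prod_congr rfl fun j hj => ?_
    rw [Finsupp.add_apply, Finsupp.single_eq_of_ne (Finset.ne_of_mem_erase hj), add_zero]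

theorem monic_standardProduct (hg : ∀ i, m.Monic (g i)) (α : σ →₀ ℕ) :
    m.Monic (standardProduct g d α) :=
  .prod fun i _ => m.monic_X.pow.mul (hg i).pow

theorem degree_standardProduct [Nontrivial R] (hg : ∀ i, m.Monic (g i))
    (hdeg : ∀ i, m.degree (g i) = Finsupp.single i (d i)) (α : σ →₀ ℕ) :
    m.degree (standardProduct g d α) = α := by
  have hpow {f : MvPolynomial σ R} (hf : m.Monic f) (k : ℕ) :
      m.degree (f ^ k) = k • m.degree f :=
    m.degree_pow_of_pow_leadingCoeff_ne_zero (by simp [hf.leadingCoeff_eq_one])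
  have hreg {f : MvPolynomial σ R} (hf : m.Monic f) : IsRegular (m.leadingCoeff f) :=
    hf.leadingCoeff_eq_one.symm ▸ isRegular_one
  rw [standardProduct, m.degree_prod_of_regular fun i _ => hreg (m.monic_X.pow.mul (hg i).pow)]
  conv_rhs => rw [← Finsupp.univ_sum_single α]
  refine Finset.sum_congr rfl fun i _ => ?_
  rw [m.degree_mul_of_isRegular_left (hreg m.monic_X.pow) (hg i).pow.ne_zero, hpow m.monic_X,
    hpow (hg i), m.degree_X, hdeg, Finsupp.smul_single, Finsupp.smul_single, ← Finsupp.single_add,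
    smul_eq_mul, smul_eq_mul, mul_one, mul_comm (α i / d i), Nat.mod_add_div]

theorem linearIndependent_standardProduct [Nontrivial R] (hg : ∀ i, m.Monic (g i))
    (hdeg : ∀ i, m.degree (g i) = Finsupp.single i (d i)) :
    LinearIndependent R (standardProduct g d) :=
  linearIndependent_of_monic_of_degree_eq (monic_standardProduct hg)
    (degree_standardProduct hg hdeg)

theorem span_range_standardProduct_eq_top [Nontrivial R] (hg : ∀ i, m.Monic (g i))
    (hdeg : ∀ i, m.degree (g i) = Finsupp.single i (d i)) :
    Submodule.span R (Set.range (standardProduct g d)) = ⊤ :=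
  span_range_eq_top_of_monic_of_degree_eq (monic_standardProduct hg)
    (degree_standardProduct hg hdeg)

theorem restrictScalars_span_range_eq_span_standardProduct [Nontrivial R] (hd : ∀ i, 0 < d i)
    (hg : ∀ i, m.Monic (g i)) (hdeg : ∀ i, m.degree (g i) = Finsupp.single i (d i)) :
    (Ideal.span (Set.range g)).restrictScalars R =
      Submodule.span R (standardProduct g d '' (reducedExponents d)ᶜ) := by
  refine le_antisymm (fun p hp => ?_) (Submodule.span_le.2 ?_)
  · obtain ⟨q, rfl⟩ := Ideal.mem_span_range_iff_exists_fun.1 hp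
    refine Submodule.sum_mem _ fun i _ => ?_
    have hq : q i ∈ Submodule.span R (Set.range (standardProduct g d)) :=
      span_range_standardProduct_eq_top hg hdeg ▸ Submodule.mem_top
    generalize q i = qi at hq
    induction hq using Submodule.span_induction with
    | zero => simp
    | add x y _ _ hx hy => rw [add_mul]; exact add_mem hx hy
    | smul c x _ hx => rw [smul_mul_assoc]; exact Submodule.smul_mem _ c hx
    | mem x hx =>
      obtain ⟨α, rfl⟩ := hx
      rw [mul_comm, ← standardProduct_add_single (hd i)]
      exact Submodule.subset_span ⟨_, fun hα => by simpa using hα i, rfl⟩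
  · rintro _ ⟨α, hα, rfl⟩
    obtain ⟨i, hi⟩ : ∃ i, d i ≤ α i := by simpa [reducedExponents] using hα
    have hle : Finsupp.single i (d i) ≤ α := by simpa using hi
    rw [← tsub_add_cancel_of_le hle, standardProduct_add_single (hd i)]
    exact Ideal.mul_mem_right _ _ (Ideal.subset_span ⟨i, rfl⟩)

end StandardProduct

theorem exists_basis_quotient_span_range {σ R : Type*} [Finite σ] [CommRing R] [Nontrivial R]
    {m : MonomialOrder σ} {g : σ → MvPolynomial σ R} {d : σ → ℕ} (hd : ∀ i, 0 < d i)
    (hg : ∀ i, m.Monic (g i)) (hdeg : ∀ i, m.degree (g i) = Finsupp.single i (d i)) :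
    ∃ b : Module.Basis (reducedExponents d) R (MvPolynomial σ R ⧸ Ideal.span (Set.range g)),
      ∀ α, b α = Ideal.Quotient.mk _ (monomial α 1) := by
  have := Fintype.ofFinite σ
  have hli : LinearIndependent R (standardProduct g d) := linearIndependent_standardProduct hg hdeg
  have hcompl := hli.isCompl_span_image (span_range_standardProduct_eq_top hg hdeg)
    (isCompl_compl (x := reducedExponents d)).symm
  rw [← restrictScalars_span_range_eq_span_standardProduct hd hg hdeg,
    Set.image_eq_range] at hcompl
  refine ⟨(Module.Basis.span (hli.comp _ Subtype.val_injective)).map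
    ((Submodule.quotientEquivOfIsCompl _ _ hcompl).symm.trans
      (Submodule.Quotient.restrictScalarsEquiv R _)), fun α => ?_⟩
  rw [Module.Basis.map_apply, Module.Basis.span_apply,
    ← standardProduct_of_mem_reducedExponents α.2]
  rfl

section Negation

variable {σ R : Type*} [CommRing R]

/-- The substitution `X i ↦ -X i`; a polynomial `p` is odd when `negVars p = -p`. -/
noncomputable def negVars : MvPolynomial σ R →ₐ[R] MvPolynomial σ R := aeval fun i => -X i

theorem negVars_X (i : σ) : negVars (X i : MvPolynomial σ R) = -X i := aeval_X _ i

theorem negVars_negVars (p : MvPolynomial σ R) : negVars (negVars p) = p := by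
  have h : (negVars (σ := σ) (R := R)).comp negVars = AlgHom.id R _ :=
    algHom_ext fun i => by simp [negVars_X]
  exact DFunLike.congr_fun h p

theorem eval_negVars (x : σ → R) (p : MvPolynomial σ R) : eval x (negVars p) = eval (-x) p := by
  have h : (aeval x : MvPolynomial σ R →ₐ[R] R).comp negVars = aeval (-x) :=
    algHom_ext fun i => by simp [negVars_X]
  exact DFunLike.congr_fun h p

theorem negVars_monomial (α : σ →₀ ℕ) (c : R) :
    negVars (monomial α c) = (-1) ^ α.degree * monomial α c := by
  rw [negVars, aeval_monomial, monomial_eq, algebraMap_eq]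
  simp only [Finsupp.prod, neg_pow (X _ : MvPolynomial σ R), Finset.prod_mul_distrib,
    Finset.prod_pow_eq_pow_sum, Finsupp.degree_apply]
  ring

variable {J : Ideal (MvPolynomial σ R)}

/-- The involution that `negVars` induces on the quotient by an ideal stable under it. -/
noncomputable def negVarsQuotient (hJ : J ≤ J.comap negVars) :
    (MvPolynomial σ R ⧸ J) →ₐ[R] MvPolynomial σ R ⧸ J :=
  Ideal.quotientMapₐ J negVars hJ

theorem negVarsQuotient_mk (hJ : J ≤ J.comap negVars) (p : MvPolynomial σ R) :
    negVarsQuotient hJ (Ideal.Quotient.mk J p) = Ideal.Quotient.mk J (negVars p) := rfl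

theorem negVarsQuotient_negVarsQuotient (hJ : J ≤ J.comap negVars) (a : MvPolynomial σ R ⧸ J) :
    negVarsQuotient hJ (negVarsQuotient hJ a) = a := by
  obtain ⟨p, rfl⟩ := Ideal.Quotient.mk_surjective a
  rw [negVarsQuotient_mk, negVarsQuotient_mk, negVars_negVars]

end Negation

section SphereSystem

open scoped MonomialOrder

theorem monic_X_pow_add_and_degree_eq {σ R : Type*} [CommRing R] [Nontrivial R]
    {m : MonomialOrder σ} {i : σ} {k : ℕ} {f : MvPolynomial σ R}
    (hf : m.degree f ≺[m] Finsupp.single i k) :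
    m.Monic (X i ^ k + f) ∧ m.degree (X i ^ k + f) = Finsupp.single i k := by
  classical
  have hX : m.degree (X i ^ k : MvPolynomial σ R) = Finsupp.single i k := by
    rw [X_pow_eq_monomial, m.degree_monomial, if_neg one_ne_zero]
  exact ⟨m.monic_X.pow.add_of_lt (hX.symm ▸ hf), (m.degree_add_of_lt (hX.symm ▸ hf)).trans hX⟩

variable {n D : ℕ} {R : Type*} [CommRing R]

/-- The equation of the sphere in `n + 1` variables, followed by the `n` equations
`X (i + 1) ^ D + h i`. -/
noncomputable def sphereSystem (D : ℕ) (h : Fin n → MvPolynomial (Fin (n + 1)) R) :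
    Fin (n + 1) → MvPolynomial (Fin (n + 1)) R :=
  Fin.cons (∑ j, X j ^ 2 - 1) fun i => X i.succ ^ D + h i

/-- The exponents of the leading pure powers of `sphereSystem`. -/
def sphereSystemDegree (n D : ℕ) : Fin (n + 1) → ℕ := Fin.cons 2 fun _ => D

open MonomialOrder in
theorem degree_sum_X_succ_sq_sub_one_lt [Nontrivial R] :
    degLex.degree (∑ j : Fin n, X j.succ ^ 2 - 1 : MvPolynomial (Fin (n + 1)) R) ≺[degLex]
      Finsupp.single 0 2 := by
  classical
  have hpos : (0 : Fin (n + 1) →₀ ℕ) ≺[degLex] Finsupp.single 0 2 := by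
    rw [map_zero, toSyn_lt_iff_ne_zero, map_ne_zero_iff _ degLex.toSyn.injective]
    simp
  refine degree_sub_le.trans_lt (max_lt (degree_sum_le.trans_lt ?_) ?_)
  · refine (Finset.sup_lt_iff (bot_le.trans_lt hpos)).2 fun j _ => ?_
    rw [X_pow_eq_monomial, degree_monomial, if_neg one_ne_zero, degLex_lt_iff,
      Finsupp.DegLex.lt_iff]
    exact .inr ⟨by simp, 0, by simp, by simp⟩
  · rwa [degree_one]

open MonomialOrder in
theorem degLex_degree_lt_single {σ : Type*} [LinearOrder σ] [WellFoundedGT σ] {i : σ}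
    {f : MvPolynomial σ R} (hf : f.totalDegree < D) :
    degLex.degree f ≺[degLex] Finsupp.single i D := by
  rw [degLex_lt_iff, Finsupp.DegLex.lt_iff]
  left
  simpa [degree_degLexDegree] using hf

theorem monic_sphereSystem_and_degree_eq [Nontrivial R] {h : Fin n → MvPolynomial (Fin (n + 1)) R}
    (hD : ∀ i, (h i).totalDegree < D) (i : Fin (n + 1)) :
    MonomialOrder.degLex.Monic (sphereSystem D h i) ∧
      MonomialOrder.degLex.degree (sphereSystem D h i) =
        Finsupp.single i (sphereSystemDegree n D i) := by
  cases i using Fin.cases with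
  | zero =>
    simpa only [sphereSystem, sphereSystemDegree, Fin.cons_zero, Fin.sum_univ_succ,
      add_sub_assoc] using monic_X_pow_add_and_degree_eq degree_sum_X_succ_sq_sub_one_lt
  | succ i => exact monic_X_pow_add_and_degree_eq (degLex_degree_lt_single (hD i))

theorem span_sphereSystem_le_comap_negVars {h : Fin n → MvPolynomial (Fin (n + 1)) R}
    (hD : Odd D) (hodd : ∀ i, negVars (h i) = -h i) :
    Ideal.span (Set.range (sphereSystem D h)) ≤
      (Ideal.span (Set.range (sphereSystem D h))).comap negVars := by
  refine Ideal.span_le.2 ?_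
  rintro _ ⟨i, rfl⟩
  have hmem (i) : sphereSystem D h i ∈ Ideal.span (Set.range (sphereSystem D h)) :=
    Ideal.subset_span ⟨i, rfl⟩
  change negVars (sphereSystem D h i) ∈ Ideal.span (Set.range (sphereSystem D h))
  cases i using Fin.cases with
  | zero =>
    convert hmem 0 using 1
    simp [sphereSystem, negVars_X]
  | succ i =>
    convert neg_mem (hmem i.succ) using 1
    simp [sphereSystem, negVars_X, hodd, hD.neg_pow, add_comm]

theorem degree_eq_add_sum_succ (α : Fin (n + 1) →₀ ℕ) :
    α.degree = α 0 + ∑ i : Fin n, α i.succ := by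
  rw [Finsupp.degree_eq_sum, Fin.sum_univ_succ]

theorem card_reducedExponents_even (n D : ℕ) :
    Nat.card {α : reducedExponents (sphereSystemDegree n D) | Even α.1.degree} = D ^ n := by
  let tail : {α : reducedExponents (sphereSystemDegree n D) | Even α.1.degree} → Fin n → Fin D :=
    fun α i => ⟨α.1.1 i.succ, α.1.2 i.succ⟩
  have hbij : tail.Bijective := by
    refine ⟨fun α β hαβ => ?_, fun f => ?_⟩
    · have htail (i : Fin n) : α.1.1 i.succ = β.1.1 i.succ :=
        congrArg Fin.val (congrFun hαβ i)
      have hα : Even α.1.1.degree := α.2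
      have hβ : Even β.1.1.degree := β.2
      have hα0 : α.1.1 0 < 2 := α.1.2 0
      have hβ0 : β.1.1 0 < 2 := β.1.2 0
      rw [degree_eq_add_sum_succ] at hα hβ
      simp only [htail] at hα
      ext i
      cases i using Fin.cases with
      | zero => grind
      | succ i => exact htail i
    · let α : Fin (n + 1) →₀ ℕ :=
        Finsupp.equivFunOnFinite.symm (Fin.cons ((∑ i, (f i : ℕ)) % 2) fun i => f i)
      have hα : α ∈ reducedExponents (sphereSystemDegree n D) := by
        intro i
        cases i using Fin.cases with
        | zero => exact Nat.mod_lt _ two_pos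
        | succ i => exact (f i).2
      have heven : Even α.degree := by
        rw [degree_eq_add_sum_succ]
        change Even ((∑ i, (f i : ℕ)) % 2 + ∑ i, (f i : ℕ))
        grind
      exact ⟨⟨⟨α, hα⟩, heven⟩, rfl⟩
  rw [Nat.card_eq_of_bijective tail hbij]
  simp

end SphereSystem

section RealZeros

theorem finrank_fixedSubalgebra_sphereSystem {K : Type*} [Field K] [NeZero (2 : K)] {n D : ℕ}
    {h : Fin n → MvPolynomial (Fin (n + 1)) K} (hD : Odd D) (hdeg : ∀ i, (h i).totalDegree < D)
    (hodd : ∀ i, negVars (h i) = -h i) :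
    Module.finrank K
      (fixedSubalgebra (negVarsQuotient (span_sphereSystem_le_comap_negVars hD hodd))) = D ^ n := by
  have hpos (i : Fin (n + 1)) : 0 < sphereSystemDegree n D i := by
    cases i using Fin.cases with
    | zero => exact two_pos
    | succ i => exact hD.pos
  obtain ⟨b, hb⟩ := exists_basis_quotient_span_range hpos
    (fun i => (monic_sphereSystem_and_degree_eq hdeg i).1)
    fun i => (monic_sphereSystem_and_degree_eq hdeg i).2
  rw [← card_reducedExponents_even]
  refine finrank_fixedSubalgebra b _ (fun α hα => ?_) fun α hα => ?_
  · rw [hb, negVarsQuotient_mk, negVars_monomial, Even.neg_one_pow hα, one_mul]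
  · rw [hb, negVarsQuotient_mk, negVars_monomial, (Nat.not_even_iff_odd.1 hα).neg_one_pow,
      neg_one_mul, map_neg]

theorem nonempty_algHom_of_odd_finrank_fixedSubalgebra {A ι : Type*} [CommRing A] [Algebra ℝ A]
    [Fintype ι] {τ : A →ₐ[ℝ] A} (hτ : ∀ a, τ (τ a) = a)
    (hodd : Odd (Module.finrank ℝ (fixedSubalgebra τ))) {x : ι → A} (hx : ∀ i, τ (x i) = -x i)
    (hsum : ∑ i, x i ^ 2 = 1) : Nonempty (A →ₐ[ℝ] ℝ) := by
  obtain ⟨χ⟩ := nonempty_algHom_of_odd_finrank hodd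
  let y (i : ι) : fixedSubalgebra τ := ⟨x i ^ 2, by
    change τ (x i ^ 2) = x i ^ 2
    rw [map_pow, hx, neg_sq]⟩
  have hy : ∑ i, y i = 1 := by
    ext
    push_cast
    exact hsum
  obtain ⟨i, -, hi⟩ : ∃ i ∈ Finset.univ, 0 < χ (y i) := by
    refine Finset.exists_lt_of_sum_lt ?_
    rw [Finset.sum_const_zero, ← map_sum, hy, map_one]
    exact one_pos
  have hc : (√(χ (y i)))⁻¹ ^ 2 = (χ (y i))⁻¹ := by rw [inv_pow, Real.sq_sqrt hi.le]
  obtain ⟨ψ, -⟩ := exists_algHom_extending hτ χ (v := (√(χ (y i)))⁻¹ • x i)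
    (by rw [map_smul, hx, smul_neg]) (w := (χ (y i))⁻¹ • y i)
    (by rw [smul_pow, hc]; rfl) (by rw [map_smul, smul_eq_mul, inv_mul_cancel₀ hi.ne'])
  exact ⟨ψ⟩

theorem exists_eval_sphereSystem_eq_zero {n D : ℕ} {h : Fin n → MvPolynomial (Fin (n + 1)) ℝ}
    (hD : Odd D) (hdeg : ∀ i, (h i).totalDegree < D) (hodd : ∀ i, negVars (h i) = -h i) :
    ∃ x : Fin (n + 1) → ℝ, ∀ i, eval x (sphereSystem D h i) = 0 := by
  let J := Ideal.span (Set.range (sphereSystem D h))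
  have hJ (i) : Ideal.Quotient.mk J (sphereSystem D h i) = 0 :=
    Ideal.Quotient.eq_zero_iff_mem.2 (Ideal.subset_span ⟨i, rfl⟩)
  let z (j : Fin (n + 1)) : MvPolynomial (Fin (n + 1)) ℝ ⧸ J := Ideal.Quotient.mk J (X j)
  have hz : ∑ j, z j ^ 2 = 1 := by simpa [sphereSystem, sub_eq_zero, z] using hJ 0
  obtain ⟨ψ⟩ := nonempty_algHom_of_odd_finrank_fixedSubalgebra
    (negVarsQuotient_negVarsQuotient (span_sphereSystem_le_comap_negVars hD hodd))
    (finrank_fixedSubalgebra_sphereSystem hD hdeg hodd ▸ hD.pow)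
    (fun j => by rw [negVarsQuotient_mk, negVars_X, map_neg]) hz
  have heval : aeval (ψ ∘ z) = ψ.comp (Ideal.Quotient.mkₐ ℝ J) :=
    algHom_ext fun j => by simp [z]
  refine ⟨ψ ∘ z, fun i => ?_⟩
  exact (DFunLike.congr_fun heval _).trans ((congrArg ψ (hJ i)).trans (map_zero ψ))

end RealZeros

section BorsukUlam

variable {n : ℕ}

theorem isCompact_setOf_sum_sq_eq_one {ι : Type*} [Fintype ι] :
    IsCompact {x : ι → ℝ | ∑ i, x i ^ 2 = 1} := by
  refine (isCompact_Icc (a := (-1 : ι → ℝ)) (b := 1)).of_isClosed_subset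
    (isClosed_eq (by fun_prop) continuous_const) fun x (hx : ∑ i, x i ^ 2 = 1) => ?_
  have hle (i) : |x i| ≤ 1 := by
    rw [← sq_le_one_iff_abs_le_one, ← hx]
    exact Finset.single_le_sum (fun j _ => sq_nonneg (x j)) (Finset.mem_univ i)
  exact ⟨fun i => (abs_le.1 (hle i)).1, fun i => (abs_le.1 (hle i)).2⟩

theorem exists_abs_eval_lt_of_odd {f : Fin n → MvPolynomial (Fin (n + 1)) ℝ}
    (hf : ∀ i, negVars (f i) = -f i) {ε : ℝ} (hε : 0 < ε) :
    ∃ x : Fin (n + 1) → ℝ, ∑ j, x j ^ 2 = 1 ∧ ∀ i, |eval x (f i)| < ε := by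
  let D := 2 * (∑ i, (f i).totalDegree) + 1
  have hdeg (i) : ((2 / ε) • f i).totalDegree < D := by
    have := Finset.single_le_sum (fun j _ => (f j).totalDegree.zero_le) (Finset.mem_univ i)
    have := totalDegree_smul_le (2 / ε) (f i)
    lia
  obtain ⟨x, hx⟩ := exists_eval_sphereSystem_eq_zero (odd_two_mul_add_one _) hdeg
    fun i => by rw [map_smul, hf, smul_neg]
  have hsum : ∑ j, x j ^ 2 = 1 := by simpa [sphereSystem, sub_eq_zero] using hx 0
  refine ⟨x, hsum, fun i => ?_⟩
  have hroot : x i.succ ^ D + 2 / ε * eval x (f i) = 0 := by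
    simpa [sphereSystem, D, smul_eval] using hx i.succ
  have hxi : |x i.succ ^ D| ≤ 1 := by
    rw [abs_pow]
    refine pow_le_one₀ (abs_nonneg _) ((sq_le_one_iff_abs_le_one _).1 (hsum ▸ ?_))
    exact Finset.single_le_sum (fun j _ => sq_nonneg (x j)) (Finset.mem_univ i.succ)
  have heval : eval x (f i) = ε / 2 * -x i.succ ^ D := by
    field_simp at hroot ⊢
    linarith
  rw [heval, abs_mul, abs_neg, abs_of_pos (half_pos hε)]
  exact (mul_le_of_le_one_right (half_pos hε).le hxi).trans_lt (half_lt_self hε)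

theorem exists_eval_eq_zero_of_odd {f : Fin n → MvPolynomial (Fin (n + 1)) ℝ}
    (hf : ∀ i, negVars (f i) = -f i) :
    ∃ x : Fin (n + 1) → ℝ, ∑ j, x j ^ 2 = 1 ∧ ∀ i, eval x (f i) = 0 := by
  let F (x : Fin (n + 1) → ℝ) (i : Fin n) : ℝ := eval x (f i)
  have hF : Continuous F := continuous_pi fun i => (f i).continuous_eval
  have hclosed : IsClosed (F '' {x | ∑ j, x j ^ 2 = 1}) :=
    (isCompact_setOf_sum_sq_eq_one.image hF).isClosed
  have hzero : 0 ∈ F '' {x | ∑ j, x j ^ 2 = 1} := by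
    rw [← hclosed.closure_eq, Metric.mem_closure_iff]
    intro ε hε
    obtain ⟨x, hx, hlt⟩ := exists_abs_eval_lt_of_odd hf hε
    refine ⟨F x, ⟨x, hx, rfl⟩, (dist_pi_lt_iff hε).2 fun i => ?_⟩
    rw [dist_comm, Pi.zero_apply, Real.dist_0_eq_abs]
    exact hlt i
  obtain ⟨x, hx, hFx⟩ := hzero
  exact ⟨x, hx, congrFun hFx⟩

theorem exists_eval_eq_eval_neg (p : Fin n → MvPolynomial (Fin (n + 1)) ℝ) :
    ∃ x : Fin (n + 1) → ℝ, ∑ j, x j ^ 2 = 1 ∧ ∀ i, eval x (p i) = eval (-x) (p i) := by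
  obtain ⟨x, hx, hzero⟩ := exists_eval_eq_zero_of_odd (f := fun i => p i - negVars (p i))
    fun i => by rw [map_sub, negVars_negVars, neg_sub]
  refine ⟨x, hx, fun i => sub_eq_zero.1 ?_⟩
  rw [← eval_negVars, ← map_sub, hzero i]

end BorsukUlam

section SphereEvaluation

variable {r : ℕ} {x : Fin r → ℝ}

/-- Evaluation of elements of the coordinate ring at the point `x` of the real sphere. -/
noncomputable def sphereEval (x : Fin r → ℝ) (hx : ∑ i, x i ^ 2 = 1) : Sring r →ₐ[ℝ] ℝ :=
  Ideal.Quotient.liftₐ (sphereIdeal r) (aeval x) fun p hp => by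
    obtain ⟨q, rfl⟩ := Ideal.mem_span_singleton'.1 hp
    simp [hx]

theorem sphereEval_mk (hx : ∑ i, x i ^ 2 = 1) (p : MvPolynomial (Fin r) ℝ) :
    sphereEval x hx (Ideal.Quotient.mk _ p) = eval x p := rfl

theorem sum_neg_sq_eq_one (hx : ∑ i, x i ^ 2 = 1) : ∑ i, (-x) i ^ 2 = 1 := by
  simpa only [Pi.neg_apply, neg_sq] using hx

theorem sphereEval_comp_eq_sphereEval_neg (hx : ∑ i, x i ^ 2 = 1) {σ : Sring r →ₐ[ℝ] Sring r}
    (hσ : ∀ i, σ (Sz r i) = -Sz r i) :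
    (sphereEval x hx).comp σ = sphereEval (-x) (sum_neg_sq_eq_one hx) := by
  refine Ideal.Quotient.algHom_ext _ (algHom_ext fun i => ?_)
  change sphereEval x hx (σ (Sz r i)) = _
  rw [hσ, map_neg]
  simp [sphereEval_mk]

theorem exists_sphereEval_eq_sphereEval_neg {n : ℕ} (s : Fin n → Sring (n + 1)) :
    ∃ (x : Fin (n + 1) → ℝ) (hx : ∑ i, x i ^ 2 = 1),
      ∀ i, sphereEval x hx (s i) = sphereEval (-x) (sum_neg_sq_eq_one hx) (s i) := by
  choose p hp using fun i => Ideal.Quotient.mk_surjective (s i)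
  obtain ⟨x, hx, heval⟩ := exists_eval_eq_eval_neg p
  refine ⟨x, hx, fun i => ?_⟩
  rw [← hp, sphereEval_mk, sphereEval_mk, heval]

end SphereEvaluation

/-- **the example of Chase.** Let `S = ℝ[z₁,…,z_r]/(Σ zᵢ² − 1)`, let `σ` be
the `ℝ`-algebra automorphism of `S` negating all the `zᵢ`, and let `R = S^σ` be the fixed
subring. Then `S` cannot be generated as an `R`-algebra by fewer than `r` elements: any
`r − 1` elements of `S` generate a proper `R`-subalgebra. -/
theorem chase_example_needs_r_generators
    (r : ℕ) (hr : 1 ≤ r)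
    (σ : Sring r ≃ₐ[ℝ] Sring r) (hσ : ∀ i, σ (Sz r i) = - Sz r i)
    (s : Fin (r - 1) → Sring r) :
    Algebra.adjoin (↥(AlgHom.equalizer σ.toAlgHom (AlgHom.id ℝ (Sring r))))
      (Set.range s) ≠ ⊤ := by
  obtain ⟨n, rfl⟩ := Nat.exists_eq_add_of_le' hr
  intro htop
  obtain ⟨x, hx, hs⟩ := exists_sphereEval_eq_sphereEval_neg (n := n) s
  have heq := eqOn_adjoin_fixedSubalgebra
    (sphereEval_comp_eq_sphereEval_neg hx (σ := σ.toAlgHom) hσ) (Set.forall_mem_range.2 hs)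
  have hx0 (j) : x j = 0 := by
    have hj : x j = -x j := by
      simpa [sphereEval_mk] using heq (htop ▸ Algebra.mem_top : Sz (n + 1) j ∈ _)
    linarith
  simp [hx0] at hx
end

section
/- Let k be a field of characteristic different from 2 containing an element i with i² = −1, let r ≥ 1, let T = k[x_1, …, x_r, y_1, …, y_r]/(x_1y_1 + ⋯ + x_ry_r − 1), let σ be the k-algebra automorphism of T determined by σ(x_i) = −x_i and σ(y_i) = −y_i for all i, and let R = T^σ be the fixed subring. Then T cannot be generated as an R-algebra by fewer than r elements: for any elements t_1, …, t_{r−1} ∈ T, the smallest R-subalgebra of T containing t_1, …, t_{r−1} is a proper subalgebra of T. -/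
open MvPolynomial

/-- The ideal `(x₁y₁ + ⋯ + x_ry_r − 1)` in `k[x₁,…,x_r,y₁,…,y_r]`, where the `x`s are
indexed by `Sum.inl` and the `y`s by `Sum.inr`. -/
noncomputable abbrev hypIdeal (k : Type u) [Field k] (r : ℕ) :
    Ideal (MvPolynomial (Fin r ⊕ Fin r) k) :=
  Ideal.span {(∑ i : Fin r, X (Sum.inl i) * X (Sum.inr i)) - 1}

/-- The ring `T = k[x₁,…,x_r,y₁,…,y_r]/(x₁y₁ + ⋯ + x_ry_r − 1)`. -/
noncomputable abbrev Tring (k : Type u) [Field k] (r : ℕ) :=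
  MvPolynomial (Fin r ⊕ Fin r) k ⧸ hypIdeal k r

/-- The class of `x_j` in `T`. -/
noncomputable abbrev Tx (k : Type u) [Field k] (r : ℕ) (j : Fin r) : Tring k r :=
  Ideal.Quotient.mk (hypIdeal k r) (X (Sum.inl j))

/-- The class of `y_j` in `T`. -/
noncomputable abbrev Ty (k : Type u) [Field k] (r : ℕ) (j : Fin r) : Tring k r :=
  Ideal.Quotient.mk (hypIdeal k r) (X (Sum.inr j))

/-!
Substituting `y i = c i * x i`, where the diagonal form `q = ∑ c i * x i ^ 2` is anisotropic over a
field `F ⊇ k` (for instance with indeterminate coefficients), turns a polynomial on the quadric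
`∑ x i * y i = 1` into a polynomial on the affine quadric `q = 1`. There the odd part of a
polynomial can be made homogeneous of odd degree with the help of powers of `q`. Fewer than `r`
forms of odd degree in `r` variables have a common nontrivial zero over an extension of `F` of odd
degree: cutting successively with them, one can always keep a component of odd degree. By
Springer's theorem `q` does not vanish at this zero, which can hence be rescaled so that `q = 1`
over an algebraic closure. The given elements of `T` thus take equal values at a point `(x, y)` and
at its antipode `(-x, -y)`. So do the elements of `T^σ`, but not all elements of `T`.
-/

namespace DeletedQuadric

universe u v

section FiniteDifferences

open Filter fwdDiff

variable {G : Type*} [AddCommGroup G] {f g : ℕ → G} {s t : ℕ} {a b : G}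

/-- The `s`-th finite difference of `f` is eventually the constant `a`. For an integer-valued `f`
this says that `f` eventually agrees with a polynomial of degree at most `s` whose coefficient
of `X ^ s` is `a / s!`. -/
def HasEventualDiff (s : ℕ) (a : G) (f : ℕ → G) : Prop :=
  ∀ᶠ m in atTop, (Δ_[1])^[s] f m = a

namespace HasEventualDiff

lemma unique (ha : HasEventualDiff s a f) (hb : HasEventualDiff s b f) : a = b := by
  obtain ⟨m, hma, hmb⟩ := (ha.and hb).exists
  exact hma.symm.trans hmb

lemma add (hf : HasEventualDiff s a f) (hg : HasEventualDiff s b g) :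
    HasEventualDiff s (a + b) (f + g) := by
  filter_upwards [hf, hg] with m hfm hgm
  rw [fwdDiff_iter_add, Pi.add_apply, hfm, hgm]

lemma neg (hf : HasEventualDiff s a f) : HasEventualDiff s (-a) (-f) := by
  filter_upwards [hf] with m hfm
  rw [← neg_one_zsmul f, fwdDiff_iter_const_smul, Pi.smul_apply, hfm, neg_one_zsmul]

lemma comp_add_iff (d : ℕ) :
    HasEventualDiff s a (fun m ↦ f (m + d)) ↔ HasEventualDiff s a f := by
  simp only [HasEventualDiff, fwdDiff_iter_comp_add]
  rw [← eventually_map (P := fun m ↦ (Δ_[1])^[s] f m = a), map_add_atTop_eq_nat]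

lemma succ_iff_fwdDiff : HasEventualDiff (s + 1) a f ↔ HasEventualDiff s a (Δ_[1] f) := Iff.rfl

lemma succ (hf : HasEventualDiff s a f) : HasEventualDiff (s + 1) 0 f := by
  filter_upwards [hf, (tendsto_add_atTop_nat 1).eventually hf] with m hm hm'
  rw [Function.iterate_succ_apply', fwdDiff, hm, hm', sub_self]

lemma of_le (hf : HasEventualDiff s 0 f) (hst : s ≤ t) : HasEventualDiff t 0 f :=
  Nat.le_induction hf (fun _ _ ↦ succ) t hst

lemma of_eventually_eq_zero (hf : ∀ᶠ m in atTop, f m = 0) : HasEventualDiff s 0 f :=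
  of_le (s := 0) hf s.zero_le

lemma exists_of_succ (hf : HasEventualDiff (s + 1) 0 f) : ∃ a, HasEventualDiff s a f := by
  obtain ⟨N, hN⟩ := eventually_atTop.1 hf
  refine ⟨(Δ_[1])^[s] f N, eventually_atTop.2 ⟨N, fun m hm ↦ ?_⟩⟩
  induction m, hm using Nat.le_induction with
  | base => rfl
  | succ m hm ih =>
    rw [← ih, ← sub_eq_zero]
    simpa only [Function.iterate_succ_apply'] using! hN m hm

lemma shift_sub (hf : HasEventualDiff (s + 1) a f) (d : ℕ) :
    HasEventualDiff s (d • a) (fun m ↦ f (m + d) - f m) := by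
  induction d with
  | zero => simpa using! of_eventually_eq_zero (.of_forall fun _ ↦ rfl)
  | succ d ih =>
    have hstep : HasEventualDiff s a (fun m ↦ f (m + d + 1) - f (m + d)) :=
      (comp_add_iff d).2 (succ_iff_fwdDiff.1 hf)
    rw [succ_nsmul']
    convert! hstep.add ih using 1
    exact funext fun m ↦ (sub_add_sub_cancel ..).symm

end HasEventualDiff

lemma hasEventualDiff_choose (n : ℕ) :
    HasEventualDiff n 1 (fun m ↦ ((m + n).choose n : ℤ)) := by
  rw [HasEventualDiff.comp_add_iff (f := fun m ↦ (m.choose n : ℤ))]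
  refine .of_forall fun m ↦ ?_
  simpa using! congrFun (fwdDiff_iter_choose 0 n) m

lemma eventually_pos_of_fwdDiff {f : ℕ → ℤ} (hf : ∀ᶠ m in atTop, 0 < Δ_[1] f m) :
    ∀ᶠ m in atTop, 0 < f m := by
  obtain ⟨N, hN⟩ := eventually_atTop.1 hf
  have hlin (j : ℕ) : f N + j ≤ f (N + j) := by
    induction j with
    | zero => simp
    | succ j ih =>
      have := hN (N + j) (by omega)
      rw [fwdDiff, add_assoc] at this
      push_cast
      omega
  refine eventually_atTop.2 ⟨N + (1 - f N).toNat, fun m hm ↦ ?_⟩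
  have := hlin (m - N)
  rw [Nat.add_sub_cancel' (by omega)] at this
  omega

lemma eventually_pos_of_fwdDiff_iter {f : ℕ → ℤ} (hf : ∀ᶠ m in atTop, 0 < (Δ_[1])^[s] f m) :
    ∀ᶠ m in atTop, 0 < f m := by
  induction s generalizing f with
  | zero => exact hf
  | succ s ih => exact eventually_pos_of_fwdDiff (ih hf)

namespace HasEventualDiff

lemma eventually_pos {f : ℕ → ℤ} {a : ℤ} (hf : HasEventualDiff s a f) (ha : 0 < a) :
    ∀ᶠ m in atTop, 0 < f m :=
  eventually_pos_of_fwdDiff_iter (hf.mono fun _ hm ↦ hm.symm ▸ ha)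

lemma exists_of_nonneg_of_le {f g : ℕ → ℤ} {a : ℤ} (hf : ∃ t, HasEventualDiff t 0 f)
    (h_nonneg : 0 ≤ f) (hfg : f ≤ g) (hg : HasEventualDiff s a g) :
    ∃ b, HasEventualDiff s b f := by
  obtain ⟨t, ht⟩ := hf
  induction t with
  | zero => exact ⟨0, ht.of_le s.zero_le⟩
  | succ t ih =>
    obtain hts | hst := le_or_gt t s
    · exact (ht.of_le (Nat.succ_le_succ hts)).exists_of_succ
    obtain ⟨c, hc⟩ := ht.exists_of_succ
    have hc_nonneg : 0 ≤ c := by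
      by_contra! h
      obtain ⟨m, hm⟩ := (hc.neg.eventually_pos (neg_pos.2 h)).exists
      exact (h_nonneg m).not_gt (neg_pos.1 hm)
    have hc_nonpos : c ≤ 0 := by
      by_contra! h
      have hdiff := hc.add (hg.succ.of_le hst).neg
      obtain ⟨m, hm⟩ := (hdiff.eventually_pos (by simpa using h)).exists
      exact (hfg m).not_gt (by simpa [← sub_eq_add_neg] using hm)
    exact ih (hc_nonneg.antisymm' hc_nonpos ▸ hc)

end HasEventualDiff

end FiniteDifferences

section LinearAlgebra

variable {R V W W' : Type*} [Ring R] [AddCommGroup V] [Module R V] [AddCommGroup W] [Module R W]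
  [AddCommGroup W'] [Module R W']

lemma finrank_map_eq_of_forall_mem (p : Submodule R V) (f : V →ₗ[R] W) (g : V →ₗ[R] W')
    (h : ∀ x ∈ p, f x = 0 ↔ g x = 0) :
    Module.finrank R (p.map f) = Module.finrank R (p.map g) := by
  have hker : LinearMap.ker (f.domRestrict p) = LinearMap.ker (g.domRestrict p) := by
    ext x
    exact h x x.2
  rw [← LinearMap.range_domRestrict, ← LinearMap.range_domRestrict]
  exact ((f.domRestrict p).quotKerEquivRange.symm ≪≫ₗ Submodule.quotEquivOfEq _ _ hker ≪≫ₗ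
    (g.domRestrict p).quotKerEquivRange).finrank_eq

lemma finrank_map_add_finrank_inf_ker {F V W : Type*} [DivisionRing F] [AddCommGroup V]
    [Module F V] [AddCommGroup W] [Module F W] (f : V →ₗ[F] W) (p : Submodule F V)
    [FiniteDimensional F p] :
    Module.finrank F (p.map f) + Module.finrank F ↥(p ⊓ LinearMap.ker f) = Module.finrank F p := by
  rw [← (f.domRestrict p).finrank_range_add_finrank_ker, LinearMap.range_domRestrict,
    ← Submodule.map_comap_subtype, Submodule.finrank_map_subtype_eq]
  rfl

end LinearAlgebra

section HilbertFunction

open Filter Module DirectSum HomogeneousIdeal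

variable {F A : Type*} [Field F] [CommRing A] [Algebra F A] (𝒜 : ℕ → Submodule F A)

/-- The Hilbert function of the graded algebra `A ⧸ I`: its value at `m` is the dimension of the
image of `𝒜 m` in `A ⧸ I`. It takes integer values so that its differences can be formed. -/
noncomputable def hilbertFunction (I : Ideal A) (m : ℕ) : ℤ :=
  finrank F ((𝒜 m).map (Ideal.Quotient.mkₐ F I).toLinearMap)

variable {𝒜} {I J P : Ideal A} {a : A} {d : ℕ}

lemma hilbertFunction_eq_finrank_map {V : Type*} [AddCommGroup V] [Module F V] (f : A →ₗ[F] V)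
    {m : ℕ} (hf : ∀ x ∈ 𝒜 m, f x = 0 ↔ x ∈ I) :
    hilbertFunction 𝒜 I m = finrank F ((𝒜 m).map f) :=
  congrArg Nat.cast <| finrank_map_eq_of_forall_mem _ _ _ fun x hx ↦
    Ideal.Quotient.eq_zero_iff_mem.trans (hf x hx).symm

lemma hilbertFunction_eq_zero {m : ℕ} (h : (𝒜 m : Set A) ⊆ I) : hilbertFunction 𝒜 I m = 0 := by
  rw [hilbertFunction_eq_finrank_map (0 : A →ₗ[F] F) fun x hx ↦ iff_of_true rfl (h hx),
    Submodule.map_zero, finrank_bot, Nat.cast_zero]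

lemma hilbertFunction_bot (m : ℕ) : hilbertFunction 𝒜 ⊥ m = finrank F (𝒜 m) := by
  rw [hilbertFunction_eq_finrank_map LinearMap.id fun _ _ ↦ Ideal.mem_bot.symm, Submodule.map_id]

lemma hilbertFunction_antitone [∀ m, FiniteDimensional F (𝒜 m)] :
    Antitone (hilbertFunction 𝒜) := fun I J hIJ m ↦ by
  have hmap : (𝒜 m).map (Ideal.Quotient.mkₐ F J).toLinearMap =
      ((𝒜 m).map (Ideal.Quotient.mkₐ F I).toLinearMap).map
        (Ideal.Quotient.factorₐ F hIJ).toLinearMap := by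
    rw [← Submodule.map_comp, ← AlgHom.comp_toLinearMap, Ideal.Quotient.factorₐ_comp_mk]
  rw [hilbertFunction, hilbertFunction, hmap]
  exact Nat.cast_le.2 (Submodule.finrank_map_le _ _)

lemma colon_singleton_of_notMem [P.IsPrime] (ha : a ∉ P) : P.colon {a} = P :=
  Ideal.le_colon.antisymm' fun _ hx ↦
    (Ideal.IsPrime.mem_or_mem ‹_› (Submodule.mem_colon_singleton.1 hx)).resolve_right ha

variable [GradedAlgebra 𝒜]

lemma isHomogeneous_sup_span_singleton (hI : I.IsHomogeneous 𝒜) (ha : a ∈ 𝒜 d) :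
    (I ⊔ Ideal.span {a}).IsHomogeneous 𝒜 :=
  hI.sup (Ideal.homogeneous_span 𝒜 {a} (by rintro _ rfl; exact ⟨d, ha⟩))

lemma isHomogeneous_colon_singleton (hI : I.IsHomogeneous 𝒜) (ha : a ∈ 𝒜 d) :
    (I.colon {a}).IsHomogeneous 𝒜 := by
  intro m x hx
  rw [Submodule.mem_colon_singleton, smul_eq_mul, mul_comm] at hx ⊢
  rw [← DirectSum.coe_decompose_mul_add_of_left_mem 𝒜 ha]
  exact hI _ hx

lemma map_mk_inf_ker_factor (hI : I.IsHomogeneous 𝒜) (ha : a ∈ 𝒜 d) (m : ℕ) :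
    (𝒜 (m + d)).map (Ideal.Quotient.mkₐ F I).toLinearMap ⊓
        LinearMap.ker (Ideal.Quotient.factorₐ F
          (le_sup_left : I ≤ I ⊔ Ideal.span {a})).toLinearMap =
      (𝒜 m).map ((Ideal.Quotient.mkₐ F I).toLinearMap ∘ₗ LinearMap.mulLeft F a) := by
  apply le_antisymm
  · rintro _ ⟨⟨f, hf, rfl⟩, hker⟩
    have hfa : f ∈ I ⊔ Ideal.span {a} := Ideal.Quotient.eq_zero_iff_mem.1 hker
    obtain ⟨g, hg, _, hh, rfl⟩ := Submodule.mem_sup.1 hfa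
    obtain ⟨h, rfl⟩ := Ideal.mem_span_singleton.1 hh
    refine ⟨decompose 𝒜 h m, SetLike.coe_mem _, Ideal.Quotient.eq.2 ?_⟩
    have hcomp : (decompose 𝒜 (g + a * h) (d + m) : A) = g + a * h :=
      decompose_of_mem_same 𝒜 (add_comm d m ▸ hf)
    rw [decompose_add, DirectSum.add_apply, Submodule.coe_add,
      coe_decompose_mul_add_of_left_mem 𝒜 ha] at hcomp
    rw [← hcomp]
    simpa using hI (d + m) hg
  · rintro _ ⟨x, hx, rfl⟩
    refine ⟨⟨a * x, add_comm d m ▸ SetLike.mul_mem_graded ha hx, rfl⟩, ?_⟩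
    exact Ideal.Quotient.eq_zero_iff_mem.2
      (Ideal.mul_mem_right _ _ (Ideal.mem_sup_right (Ideal.mem_span_singleton_self a)))

lemma induction_on_isHomogeneous [IsNoetherianRing A] {p : Ideal A → Prop} (htop : p ⊤)
    (hprime : ∀ P : Ideal A, P.IsPrime → P.IsHomogeneous 𝒜 →
      (∀ J, P < J → J.IsHomogeneous 𝒜 → p J) → p P)
    (hcolon : ∀ (I : Ideal A) (a : A) (d : ℕ), I.IsHomogeneous 𝒜 → a ∈ 𝒜 d →
      p (I ⊔ Ideal.span {a}) → p (I.colon {a}) → p I)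
    (hI : I.IsHomogeneous 𝒜) : p I := by
  induction I using IsNoetherian.induction with
  | hgt I ih =>
    by_cases htop' : I = ⊤
    · exact htop' ▸ htop
    by_cases hI' : Ideal.IsPrime I
    · exact hprime I hI' hI fun J hJ hJh ↦ ih J hJ hJh
    obtain ⟨a, b, ⟨d, ha⟩, hab, haI, hbI⟩ : ∃ a b, SetLike.IsHomogeneousElem 𝒜 a ∧
        a * b ∈ I ∧ a ∉ I ∧ b ∉ I := by
      by_contra! h
      exact hI' (hI.isPrime_of_homogeneous_mem_or_mem htop' fun {a b} ha _ hab ↦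
        or_iff_not_imp_left.2 (h a b ha hab))
    refine hcolon I a d hI ha (ih _ ?_ (isHomogeneous_sup_span_singleton hI ha))
      (ih _ ?_ (isHomogeneous_colon_singleton hI ha))
    · exact left_lt_sup.2 fun h ↦ haI (h (Ideal.mem_span_singleton_self a))
    · refine Ideal.le_colon.lt_of_not_ge fun h ↦ hbI (h ?_)
      rwa [Submodule.mem_colon_singleton, smul_eq_mul, mul_comm]

lemma hilbertFunction_eq_zero_of_subset (h𝒜 : 𝒜₊.toIdeal ≤ Ideal.span (𝒜 1))
    (hI : (𝒜 1 : Set A) ⊆ I) {m : ℕ} (hm : 0 < m) : hilbertFunction 𝒜 I m = 0 :=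
  hilbertFunction_eq_zero fun _ hx ↦
    Ideal.span_le.2 hI (h𝒜 (HomogeneousIdeal.mem_irrelevant_of_mem 𝒜 hm hx))

variable [∀ m, FiniteDimensional F (𝒜 m)]

/-- The exact sequence `0 ⟶ A ⧸ (I : a) ⟶ A ⧸ I ⟶ A ⧸ (I + (a)) ⟶ 0`, in degree `m + d`. -/
lemma hilbertFunction_add_degree (hI : I.IsHomogeneous 𝒜) (ha : a ∈ 𝒜 d) (m : ℕ) :
    hilbertFunction 𝒜 I (m + d) =
      hilbertFunction 𝒜 (I ⊔ Ideal.span {a}) (m + d) + hilbertFunction 𝒜 (I.colon {a}) m := by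
  let ρ := (Ideal.Quotient.factorₐ F (le_sup_left : I ≤ I ⊔ Ideal.span {a})).toLinearMap
  have hcolon : hilbertFunction 𝒜 (I.colon {a}) m =
      finrank F ((𝒜 m).map ((Ideal.Quotient.mkₐ F I).toLinearMap ∘ₗ LinearMap.mulLeft F a)) := by
    refine hilbertFunction_eq_finrank_map _ fun x _ ↦ ?_
    rw [Submodule.mem_colon_singleton, smul_eq_mul, mul_comm]
    exact Ideal.Quotient.eq_zero_iff_mem
  have hsup : hilbertFunction 𝒜 (I ⊔ Ideal.span {a}) (m + d) =
      finrank F (((𝒜 (m + d)).map (Ideal.Quotient.mkₐ F I).toLinearMap).map ρ) := by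
    rw [← Submodule.map_comp]
    rfl
  rw [hcolon, hsup, ← map_mk_inf_ker_factor hI ha, ← Nat.cast_add,
    finrank_map_add_finrank_inf_ker, hilbertFunction]

lemma hilbertFunction_sup_span_singleton [P.IsPrime] (hP : P.IsHomogeneous 𝒜) (ha : a ∈ 𝒜 d)
    (haP : a ∉ P) (m : ℕ) :
    hilbertFunction 𝒜 (P ⊔ Ideal.span {a}) (m + d) =
      hilbertFunction 𝒜 P (m + d) - hilbertFunction 𝒜 P m := by
  rw [hilbertFunction_add_degree hP ha, colon_singleton_of_notMem haP, add_sub_cancel_right]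

lemma HasEventualDiff.hilbertFunction_add_degree {s : ℕ} {b c : ℤ} (hI : I.IsHomogeneous 𝒜)
    (ha : a ∈ 𝒜 d)
    (hsup : HasEventualDiff s b (hilbertFunction 𝒜 (I ⊔ Ideal.span {a})))
    (hcolon : HasEventualDiff s c (hilbertFunction 𝒜 (I.colon {a}))) :
    HasEventualDiff s (b + c) (hilbertFunction 𝒜 I) := by
  rw [← comp_add_iff d]
  convert! ((comp_add_iff d).2 hsup).add hcolon using 1
  exact funext (DeletedQuadric.hilbertFunction_add_degree hI ha)

/-- The Hilbert–Serre theorem: the Hilbert function eventually agrees with a polynomial. -/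
lemma exists_hasEventualDiff_zero_hilbertFunction [IsNoetherianRing A]
    (h𝒜 : 𝒜₊.toIdeal ≤ Ideal.span (𝒜 1)) (hI : I.IsHomogeneous 𝒜) :
    ∃ s, HasEventualDiff s 0 (hilbertFunction 𝒜 I) := by
  refine induction_on_isHomogeneous (p := fun I ↦ ∃ s, HasEventualDiff s 0 (hilbertFunction 𝒜 I)) ?_
    (fun P hP hPh ih ↦ ?_) (fun I a d hI ha ⟨s, hs⟩ ⟨t, ht⟩ ↦ ⟨max s t, ?_⟩) hI
  · exact ⟨0, .of_forall fun m ↦ hilbertFunction_eq_zero le_top⟩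
  · by_cases h1 : (𝒜 1 : Set A) ⊆ P
    · exact ⟨0, (eventually_gt_atTop 0).mono fun m ↦ hilbertFunction_eq_zero_of_subset h𝒜 h1⟩
    obtain ⟨x, hx, hxP⟩ := Set.not_subset.1 h1
    obtain ⟨s, hs⟩ := ih _ (left_lt_sup.2 fun h ↦ hxP (h (Ideal.mem_span_singleton_self x)))
      (isHomogeneous_sup_span_singleton hPh hx)
    refine ⟨s + 1, HasEventualDiff.succ_iff_fwdDiff.2 ?_⟩
    convert! (HasEventualDiff.comp_add_iff 1).2 hs using 1
    exact funext fun m ↦ (hilbertFunction_sup_span_singleton hPh hx hxP m).symm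
  · simpa using (hs.of_le (le_max_left s t)).hilbertFunction_add_degree hI ha
      (ht.of_le (le_max_right s t))

end HilbertFunction

section OddDegreePrime

open Module DirectSum HomogeneousIdeal

variable {F A : Type*} [Field F] [CommRing A] [Algebra F A] {𝒜 : ℕ → Submodule F A}
  {I P : Ideal A} {a : A} {d n : ℕ}

variable (𝒜) in
/-- `P` is a homogeneous prime ideal whose projective variety has dimension `n` and odd degree,
both being read off the Hilbert polynomial. -/
structure IsOddDegreePrime [GradedAlgebra 𝒜] (n : ℕ) (P : Ideal A) : Prop where
  isPrime : P.IsPrime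
  isHomogeneous : P.IsHomogeneous 𝒜
  exists_odd : ∃ e, Odd e ∧ HasEventualDiff n e (hilbertFunction 𝒜 P)

variable [GradedAlgebra 𝒜]

lemma IsOddDegreePrime.not_subset (hP : IsOddDegreePrime 𝒜 n P)
    (h𝒜 : 𝒜₊.toIdeal ≤ Ideal.span (𝒜 1)) : ¬ (𝒜 1 : Set A) ⊆ P := by
  intro h
  obtain ⟨e, he, hdiff⟩ := hP.exists_odd
  have hzero : HasEventualDiff n 0 (hilbertFunction 𝒜 P) := .of_eventually_eq_zero <|
    (Filter.eventually_gt_atTop 0).mono fun _ ↦ hilbertFunction_eq_zero_of_subset h𝒜 h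
  rw [hdiff.unique hzero] at he
  exact Int.not_odd_zero he

variable [∀ m, FiniteDimensional F (𝒜 m)] [IsNoetherianRing A]

/-- In `0 ⟶ A ⧸ (I : a) ⟶ A ⧸ I ⟶ A ⧸ (I + (a)) ⟶ 0` the degrees add up, so one of the outer terms
has odd degree. -/
lemma exists_isOddDegreePrime_ge (h𝒜 : 𝒜₊.toIdeal ≤ Ideal.span (𝒜 1)) (hI : I.IsHomogeneous 𝒜)
    {e : ℤ} (he : Odd e) (hdiff : HasEventualDiff n e (hilbertFunction 𝒜 I)) :
    ∃ P, I ≤ P ∧ IsOddDegreePrime 𝒜 n P := by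
  revert e
  refine induction_on_isHomogeneous (p := fun I ↦ ∀ {e : ℤ}, Odd e →
    HasEventualDiff n e (hilbertFunction 𝒜 I) → ∃ P, I ≤ P ∧ IsOddDegreePrime 𝒜 n P)
    (fun {e} he hdiff ↦ ?_) (fun P hP hPh _ e he hdiff ↦ ⟨P, le_rfl, hP, hPh, e, he, hdiff⟩)
    (fun I a d hI ha hsup hcolon e he hdiff ↦ ?_) hI
  · have hzero : HasEventualDiff n 0 (hilbertFunction 𝒜 ⊤) :=
      .of_eventually_eq_zero (.of_forall fun m ↦ hilbertFunction_eq_zero le_top)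
    rw [hdiff.unique hzero] at he
    exact absurd he Int.not_odd_zero
  · have hexists {J : Ideal A} (hJ : J.IsHomogeneous 𝒜) (hIJ : I ≤ J) :
        ∃ b, HasEventualDiff n b (hilbertFunction 𝒜 J) :=
      HasEventualDiff.exists_of_nonneg_of_le (exists_hasEventualDiff_zero_hilbertFunction h𝒜 hJ)
        (fun _ ↦ Int.natCast_nonneg _) (hilbertFunction_antitone hIJ) hdiff
    obtain ⟨b, hb⟩ := hexists (isHomogeneous_sup_span_singleton hI ha) le_sup_left
    obtain ⟨c, hc⟩ := hexists (isHomogeneous_colon_singleton hI ha) Ideal.le_colon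
    rw [hdiff.unique (.hilbertFunction_add_degree hI ha hb hc), Int.odd_add] at he
    obtain hb_odd | hb_even := b.even_or_odd.symm
    · obtain ⟨P, hle, hP⟩ := hsup hb_odd hb
      exact ⟨P, le_sup_left.trans hle, hP⟩
    · obtain ⟨P, hle, hP⟩ := hcolon (by grind) hc
      exact ⟨P, Ideal.le_colon.trans hle, hP⟩

namespace IsOddDegreePrime

/-- Bézout: cutting with a form of degree `d` multiplies the degree by `d`. -/
lemma exists_sup_span_singleton_le (h𝒜 : 𝒜₊.toIdeal ≤ Ideal.span (𝒜 1))
    (hP : IsOddDegreePrime 𝒜 (n + 1) P) (ha : a ∈ 𝒜 d) (hd : Odd d) (haP : a ∉ P) :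
    ∃ Q, P ⊔ Ideal.span {a} ≤ Q ∧ IsOddDegreePrime 𝒜 n Q := by
  have := hP.isPrime
  obtain ⟨e, he, hdiff⟩ := hP.exists_odd
  refine exists_isOddDegreePrime_ge h𝒜 (isHomogeneous_sup_span_singleton hP.isHomogeneous ha)
    (e := d • e) ?_ ?_
  · rw [nsmul_eq_mul]
    exact ((Int.odd_coe_nat d).2 hd).mul he
  · rw [← HasEventualDiff.comp_add_iff d]
    convert! hdiff.shift_sub d using 1
    exact funext (hilbertFunction_sup_span_singleton hP.isHomogeneous ha haP)

lemma exists_ge_zero (h𝒜 : 𝒜₊.toIdeal ≤ Ideal.span (𝒜 1)) (hP : IsOddDegreePrime 𝒜 n P) :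
    ∃ Q, P ≤ Q ∧ IsOddDegreePrime 𝒜 0 Q := by
  induction n generalizing P with
  | zero => exact ⟨P, le_rfl, hP⟩
  | succ n ih =>
    obtain ⟨x, hx, hxP⟩ := Set.not_subset.1 (hP.not_subset h𝒜)
    obtain ⟨Q, hPQ, hQ⟩ := hP.exists_sup_span_singleton_le h𝒜 hx odd_one hxP
    obtain ⟨Q', hQQ', hQ'⟩ := ih hQ
    exact ⟨Q', (le_sup_left.trans hPQ).trans hQQ', hQ'⟩

lemma exists_ge_zero_of_card_le (h𝒜 : 𝒜₊.toIdeal ≤ Ideal.span (𝒜 1)) (s : Finset A)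
    (hs : ∀ a ∈ s, ∃ d, Odd d ∧ a ∈ 𝒜 d) (hP : IsOddDegreePrime 𝒜 n P) (hcard : s.card ≤ n) :
    ∃ Q, P ≤ Q ∧ (s : Set A) ⊆ Q ∧ IsOddDegreePrime 𝒜 0 Q := by
  classical
  induction s using Finset.induction_on generalizing n P with
  | empty =>
    obtain ⟨Q, hPQ, hQ⟩ := hP.exists_ge_zero h𝒜
    exact ⟨Q, hPQ, by simp, hQ⟩
  | insert a s has ih =>
    rw [Finset.card_insert_of_notMem has] at hcard
    obtain ⟨⟨d, hd, had⟩, hs⟩ := Finset.forall_mem_insert .. |>.1 hs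
    obtain ⟨n, rfl⟩ := Nat.exists_eq_add_of_le' (Nat.one_le_of_lt hcard)
    simp only [Finset.coe_insert, Set.insert_subset_iff]
    by_cases haP : a ∈ P
    · obtain ⟨Q, hPQ, hsQ, hQ⟩ := ih hs hP (by omega)
      exact ⟨Q, hPQ, ⟨hPQ haP, hsQ⟩, hQ⟩
    · obtain ⟨P', hPP', hP'⟩ := hP.exists_sup_span_singleton_le h𝒜 had hd haP
      obtain ⟨Q, hPQ, hsQ, hQ⟩ := ih hs hP' (by omega)
      have hle := hPP'.trans hPQ
      exact ⟨Q, le_sup_left.trans hle, ⟨hle (Ideal.mem_sup_right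
        (Ideal.mem_span_singleton_self a)), hsQ⟩, hQ⟩

end IsOddDegreePrime

end OddDegreePrime

section ProjectivePoints

open Filter Module HomogeneousIdeal

attribute [local instance] MvPolynomial.gradedAlgebra

lemma finrank_range_of_eventually_finrank_map {F A B : Type*} [Field F] [CommRing A] [Algebra F A]
    [Ring B] [Algebra F B] {𝒜 : ℕ → Submodule F A} [GradedAlgebra 𝒜]
    [∀ m, FiniteDimensional F (𝒜 m)] (φ : A →ₐ[F] B) {x : A} (hx : x ∈ 𝒜 1) (hφx : φ x = 1)
    {e : ℕ} (he : ∀ᶠ m in atTop, finrank F ((𝒜 m).map φ.toLinearMap) = e) :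
    FiniteDimensional F φ.range ∧ finrank F φ.range = e := by
  have hmono : Monotone fun m ↦ (𝒜 m).map φ.toLinearMap := by
    refine monotone_nat_of_le_succ fun m ↦ ?_
    rintro _ ⟨f, hf, rfl⟩
    exact ⟨f * x, SetLike.mul_mem_graded hf hx, by simp [hφx]⟩
  obtain ⟨N, hN⟩ := eventually_atTop.1 he
  have hstable (m : ℕ) : (𝒜 m).map φ.toLinearMap ≤ (𝒜 N).map φ.toLinearMap := by
    have heq := Submodule.eq_of_le_of_finrank_eq (hmono (le_max_left N m))
      ((hN N le_rfl).trans (hN _ (le_max_left N m)).symm)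
    exact (hmono (le_max_right N m)).trans heq.ge
  have hrange : Subalgebra.toSubmodule φ.range = (𝒜 N).map φ.toLinearMap := by
    refine le_antisymm ?_ ?_
    · rintro _ ⟨f, rfl⟩
      change φ f ∈ _
      classical
      rw [← DirectSum.sum_support_decompose 𝒜 f, map_sum]
      exact Submodule.sum_mem _ fun m _ ↦ hstable m ⟨_, SetLike.coe_mem _, rfl⟩
    · rintro _ ⟨f, -, rfl⟩
      exact ⟨f, rfl⟩
  rw [← Subalgebra.finrank_toSubmodule, ← Subalgebra.finiteDimensional_toSubmodule, hrange]
  exact ⟨inferInstance, hN N le_rfl⟩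

variable {ι F : Type*} [Field F]

lemma aeval_smul_of_isHomogeneous {R A : Type*} [CommSemiring R] [CommSemiring A] [Algebra R A]
    {f : MvPolynomial ι R} {m : ℕ} (hf : f.IsHomogeneous m) (z : A) (v : ι → A) :
    aeval (z • v) f = z ^ m * aeval v f := by
  simp only [aeval_def, eval₂_eq, Finset.mul_sum]
  refine Finset.sum_congr rfl fun d hd ↦ ?_
  simp only [Pi.smul_apply, smul_eq_mul, mul_pow, Finset.prod_mul_distrib,
    Finset.prod_pow_eq_pow_sum, hf.degree_eq_sum_deg_support hd]
  rw [mul_left_comm]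

instance [Finite ι] (m : ℕ) : FiniteDimensional F (homogeneousSubmodule ι F m) :=
  Module.Finite.iff_fg.2 (homogeneousSubmodule_fg ι F m)

lemma finrank_homogeneousSubmodule [Fintype ι] {n : ℕ} (hn : Fintype.card ι = n + 1) (m : ℕ) :
    finrank F (homogeneousSubmodule ι F m) = (m + n).choose n := by
  classical
  have hdegree : {d : ι →₀ ℕ | d.degree = m} =
      (Finset.univ.finsuppAntidiag m : Finset (ι →₀ ℕ)) := by
    ext d
    simp [Finsupp.degree_eq_sum]
  rw [homogeneousSubmodule_eq_finsupp_supported, hdegree,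
    (AddMonoidAlgebra.supportedEquivFinsupp _).finrank_eq, finrank_finsupp_self]
  simp only [Finset.coe_sort_coe, Fintype.card_coe]
  rw [Finset.card_finsuppAntidiag_nat_eq_choose, Finset.card_univ, hn,
    show n + 1 + m - 1 = m + n by omega, Nat.choose_symm_add]

lemma isOddDegreePrime_bot [Fintype ι] {n : ℕ} (hn : Fintype.card ι = n + 1) :
    IsOddDegreePrime (homogeneousSubmodule ι F) n ⊥ where
  isPrime := Ideal.isPrime_bot
  isHomogeneous := Ideal.IsHomogeneous.bot _
  exists_odd := by
    refine ⟨1, odd_one, ?_⟩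
    convert! hasEventualDiff_choose n using 1
    exact funext fun m ↦ by rw [hilbertFunction_bot, finrank_homogeneousSubmodule hn]

lemma irrelevant_homogeneousSubmodule_le_span :
    (homogeneousSubmodule ι F)₊.toIdeal ≤ Ideal.span (homogeneousSubmodule ι F 1) := by
  refine (HomogeneousIdeal.toIdeal_irrelevant_le _).2 fun m hm f (hf : f.IsHomogeneous m) ↦ ?_
  suffices f ∈ Ideal.span (X '' Set.univ) by
    refine Ideal.span_mono ?_ this
    rintro _ ⟨i, -, rfl⟩
    exact isHomogeneous_X F i
  refine mem_ideal_span_X_image.2 fun d hd ↦ ?_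
  by_contra! h
  have hd0 : d = 0 := Finsupp.ext fun i ↦ h i trivial
  exact hm.ne (by simp [hf.degree_eq_sum_deg_support hd, hd0])

lemma IsOddDegreePrime.exists_X_notMem {n : ℕ} {P : Ideal (MvPolynomial ι F)}
    (hP : IsOddDegreePrime (homogeneousSubmodule ι F) n P) : ∃ j, X j ∉ P := by
  by_contra! h
  refine hP.not_subset irrelevant_homogeneousSubmodule_le_span ?_
  rw [homogeneousSubmodule_one_eq_span_X]
  exact Submodule.span_le (p := P.restrictScalars F).2 (Set.range_subset_iff.2 h)

lemma exists_dehomogenization {ι : Type v} {F : Type u} [Field F] {P : Ideal (MvPolynomial ι F)}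
    (hP : P.IsPrime) {j : ι} (hj : X j ∉ P) :
    ∃ (K : Type (max u v)) (_ : Field K) (_ : Algebra F K) (φ : MvPolynomial ι F →ₐ[F] K),
      φ (X j) = 1 ∧ ∀ m f, f.IsHomogeneous m → (φ f = 0 ↔ f ∈ P) := by
  let K := FractionRing (MvPolynomial ι F ⧸ P)
  let π : MvPolynomial ι F →ₐ[F] K :=
    (IsScalarTower.toAlgHom F (MvPolynomial ι F ⧸ P) K).comp (Ideal.Quotient.mkₐ F P)
  have hπ (f) : π f = 0 ↔ f ∈ P := by
    rw [← Ideal.Quotient.eq_zero_iff_mem]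
    exact (FaithfulSMul.algebraMap_injective (MvPolynomial ι F ⧸ P) K).eq_iff' (map_zero _)
  have hj0 : π (X j) ≠ 0 := (hπ _).not.2 hj
  refine ⟨K, inferInstance, inferInstance, aeval ((π (X j))⁻¹ • fun i ↦ π (X i)), ?_,
    fun m f hf ↦ ?_⟩
  · rw [aeval_X, Pi.smul_apply, smul_eq_mul, inv_mul_cancel₀ hj0]
  · rw [aeval_smul_of_isHomogeneous hf, ← hπ, mul_eq_zero, or_iff_right (by simp [hj0])]
    exact iff_of_eq (congrArg (· = 0) (DFunLike.congr_fun (aeval_unique π).symm f))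

lemma IsOddDegreePrime.exists_point {ι : Type v} {F : Type u} [Finite ι] [Field F]
    {P : Ideal (MvPolynomial ι F)} (hP : IsOddDegreePrime (homogeneousSubmodule ι F) 0 P) :
    ∃ (L : Type (max u v)) (_ : Field L) (_ : Algebra F L),
      FiniteDimensional F L ∧ Odd (finrank F L) ∧ ∃ v : ι → L, v ≠ 0 ∧ ∀ f ∈ P, aeval v f = 0 := by
  obtain ⟨j, hj⟩ := hP.exists_X_notMem
  obtain ⟨K, _, _, φ, hφj, hφ⟩ := exists_dehomogenization hP.isPrime hj
  obtain ⟨e, he, hdiff⟩ := hP.exists_odd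
  obtain ⟨m, rfl : hilbertFunction _ P m = e⟩ := hdiff.exists
  have hrank : ∀ᶠ m' in atTop, finrank F ((homogeneousSubmodule ι F m').map φ.toLinearMap) =
      finrank F ((homogeneousSubmodule ι F m).map φ.toLinearMap) := by
    filter_upwards [hdiff] with m' (hm' : hilbertFunction _ P m' = _)
    rw [hilbertFunction_eq_finrank_map φ.toLinearMap (hφ m'),
      hilbertFunction_eq_finrank_map φ.toLinearMap (hφ m)] at hm'
    exact Nat.cast_injective hm'
  obtain ⟨_, hfinrank⟩ := finrank_range_of_eventually_finrank_map φ (isHomogeneous_X F j) hφj hrank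
  have hφP (f) (hf : f ∈ P) : φ f = 0 := by
    rw [← sum_homogeneousComponent f, map_sum]
    exact Finset.sum_eq_zero fun m _ ↦ (hφ m _ (homogeneousComponent_isHomogeneous m f)).2
      (homogeneousComponent_mem_of_mem hP.isHomogeneous hf m)
  refine ⟨φ.range, fieldOfFiniteDimensional F φ.range, inferInstance, inferInstance, ?_,
    φ.rangeRestrict ∘ X, fun h ↦ ?_, fun f hf ↦ ?_⟩
  · rwa [hfinrank, ← Int.odd_coe_nat, ← hilbertFunction_eq_finrank_map φ.toLinearMap (hφ m)]
  · exact one_ne_zero (hφj.symm.trans (congrArg Subtype.val (congrFun h j)))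
  · rw [← aeval_unique φ.rangeRestrict]
    exact Subtype.ext (hφP f hf)

theorem exists_odd_finrank_point {ι : Type v} {F : Type u} [Fintype ι] [Field F]
    (s : Finset (MvPolynomial ι F)) (hs : ∀ f ∈ s, ∃ d, Odd d ∧ f.IsHomogeneous d)
    (hcard : s.card < Fintype.card ι) :
    ∃ (L : Type (max u v)) (_ : Field L) (_ : Algebra F L),
      FiniteDimensional F L ∧ Odd (finrank F L) ∧ ∃ v : ι → L, v ≠ 0 ∧ ∀ f ∈ s, aeval v f = 0 := by
  obtain ⟨n, hn⟩ := Nat.exists_eq_add_of_le' (Nat.one_le_of_lt hcard)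
  have hbot : IsOddDegreePrime (homogeneousSubmodule ι F) n ⊥ := isOddDegreePrime_bot hn
  obtain ⟨P, -, hsP, hP⟩ := hbot.exists_ge_zero_of_card_le (𝒜 := homogeneousSubmodule ι F)
    irrelevant_homogeneousSubmodule_le_span s hs (by omega)
  obtain ⟨L, _, _, hfin, hodd, v, hv, hvP⟩ := hP.exists_point
  exact ⟨L, inferInstance, inferInstance, hfin, hodd, v, hv, fun f hf ↦ hvP f (hsP hf)⟩

end ProjectivePoints

section Anisotropic

variable {ι : Type*}

lemma dvd_aeval_sub_aeval {R A : Type*} [CommRing R] [CommRing A] [Algebra R A]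
    (q : MvPolynomial ι R) {p : A} {f g : ι → A} (h : ∀ i, p ∣ f i - g i) :
    p ∣ aeval f q - aeval g q := by
  have heq : (fun i ↦ Ideal.Quotient.mkₐ R (Ideal.span {p}) (f i)) =
      fun i ↦ Ideal.Quotient.mkₐ R (Ideal.span {p}) (g i) :=
    funext fun i ↦ Ideal.Quotient.eq.2 (Ideal.mem_span_singleton.2 (h i))
  rw [← Ideal.mem_span_singleton, ← Ideal.Quotient.eq, ← Ideal.Quotient.mkₐ_eq_mk R,
    comp_aeval_apply, comp_aeval_apply, heq]

/-- The polynomial `q`, with coefficients in `R`, has only the trivial zero in the `R`-algebra `K`.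
This notion is meant for homogeneous polynomials. -/
def IsAnisotropic {R : Type*} (K : Type*) [CommSemiring R] [CommSemiring K] [Algebra R K]
    (q : MvPolynomial ι R) : Prop :=
  ∀ v : ι → K, aeval v q = 0 → v = 0

section Polynomial

open scoped Polynomial

variable {R : Type*} [CommSemiring R] {q : MvPolynomial ι R} {f : ι → R[X]} {d m : ℕ}

lemma coeff_prod_sum_of_natDegree_le (s : Finset ι) (e : ι → ℕ)
    (hf : ∀ i ∈ s, (f i).natDegree ≤ e i) :
    (∏ i ∈ s, f i).coeff (∑ i ∈ s, e i) = ∏ i ∈ s, (f i).coeff (e i) := by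
  classical
  induction s using Finset.induction_on with
  | empty => simp
  | insert i s hi ih =>
    obtain ⟨hfi, hf⟩ := Finset.forall_mem_insert .. |>.1 hf
    rw [Finset.prod_insert hi, Finset.sum_insert hi, Finset.prod_insert hi, ← ih hf]
    exact Polynomial.coeff_mul_add_eq_of_natDegree_le hfi
      ((Polynomial.natDegree_prod_le s f).trans (Finset.sum_le_sum hf))

lemma natDegree_aeval_le (hq : q.IsHomogeneous m) (hf : ∀ i, (f i).natDegree ≤ d) :
    (aeval f q).natDegree ≤ m * d := by
  rw [aeval_def, eval₂_eq]
  refine Polynomial.natDegree_sum_le_of_forall_le _ _ fun s hs ↦ ?_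
  refine (Polynomial.natDegree_C_mul_le _ _).trans ((Polynomial.natDegree_prod_le _ _).trans ?_)
  rw [hq.degree_eq_sum_deg_support hs, Finset.sum_mul]
  exact Finset.sum_le_sum fun i _ ↦ Polynomial.natDegree_pow_le_of_le _ (hf i)

lemma coeff_aeval (hq : q.IsHomogeneous m) (hf : ∀ i, (f i).natDegree ≤ d) :
    (aeval f q).coeff (m * d) = aeval (fun i ↦ (f i).coeff d) q := by
  rw [aeval_def, aeval_def, eval₂_eq, eval₂_eq, Polynomial.finsetSum_coeff]
  refine Finset.sum_congr rfl fun s hs ↦ ?_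
  rw [Polynomial.algebraMap_eq, Polynomial.coeff_C_mul, hq.degree_eq_sum_deg_support hs,
    Finset.sum_mul, coeff_prod_sum_of_natDegree_le _ _
      fun i _ ↦ Polynomial.natDegree_pow_le_of_le _ (hf i)]
  exact congrArg _ (Finset.prod_congr rfl fun i _ ↦ Polynomial.coeff_pow_of_natDegree_le (hf i))

lemma IsAnisotropic.coeff_aeval_ne_zero (haniso : IsAnisotropic R q) (hq : q.IsHomogeneous m)
    {j : ι} (hj : f j ≠ 0) (hmax : ∀ i, (f i).natDegree ≤ (f j).natDegree) :
    (aeval f q).coeff (m * (f j).natDegree) ≠ 0 := by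
  rw [coeff_aeval hq hmax]
  exact fun h ↦ Polynomial.leadingCoeff_ne_zero.2 hj (congrFun (haniso _ h) j)

lemma IsAnisotropic.natDegree_aeval (haniso : IsAnisotropic R q) (hq : q.IsHomogeneous m)
    {j : ι} (hj : f j ≠ 0) (hmax : ∀ i, (f i).natDegree ≤ (f j).natDegree) :
    (aeval f q).natDegree = m * (f j).natDegree :=
  Polynomial.natDegree_eq_of_le_of_coeff_ne_zero (natDegree_aeval_le hq hmax)
    (haniso.coeff_aeval_ne_zero hq hj hmax)

end Polynomial

end Anisotropic

section Springer

open Module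
open scoped Polynomial IntermediateField

lemma exists_eq_smul_of_ne_zero {ι R : Type*} [Finite ι] [CommRing R]
    [UniqueFactorizationMonoid R] {f : ι → R} (hf : f ≠ 0) :
    ∃ (g : R) (u : ι → R), f = g • u ∧ ∀ p, (∀ i, p ∣ u i) → IsUnit p := by
  have := Fintype.ofFinite ι
  let _ := Classical.choice (inferInstance : Nonempty (NormalizedGCDMonoid R))
  obtain ⟨i, -⟩ := Function.ne_iff.1 hf
  obtain ⟨u, hfu, hu⟩ := Finset.univ.extract_gcd f ⟨i, Finset.mem_univ i⟩
  exact ⟨_, u, funext fun i ↦ hfu i (Finset.mem_univ i), fun p hp ↦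
    isUnit_of_dvd_one (hu ▸ Finset.dvd_gcd fun i _ ↦ hp i)⟩

variable {ι F : Type*} [Field F] {q : MvPolynomial ι F}

lemma exists_irreducible_dvd_of_odd_natDegree {g : F[X]} (hg : Odd g.natDegree) :
    ∃ p, Irreducible p ∧ Odd p.natDegree ∧ p ∣ g := by
  induction g using WfDvdMonoid.induction_on_irreducible with
  | zero => simp at hg
  | unit u hu => simp [Polynomial.natDegree_eq_zero_of_isUnit hu] at hg
  | mul a p ha hp ih =>
    by_cases h : Odd p.natDegree
    · exact ⟨p, hp, h, dvd_mul_right p a⟩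
    · rw [Polynomial.natDegree_mul hp.ne_zero ha] at hg
      obtain ⟨p', hp', hodd, hdvd⟩ := ih (by grind)
      exact ⟨p', hp', hodd, hdvd.mul_left p⟩

/-- The descent step of Springer's theorem: the cofactor of `p` in `q(u)` has odd degree
`2 * deg u - deg p < deg p`. -/
lemma IsAnisotropic.exists_irreducible_dvd_aeval [Finite ι] (haniso : IsAnisotropic F q)
    (hq : q.IsHomogeneous 2) {p : F[X]} (hodd : Odd p.natDegree) {u : ι → F[X]} (hu : u ≠ 0)
    (hup : ∀ i, (u i).natDegree < p.natDegree) (hpu : p ∣ aeval u q) :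
    ∃ p', Irreducible p' ∧ Odd p'.natDegree ∧ p'.natDegree < p.natDegree ∧ p' ∣ aeval u q := by
  obtain ⟨j, hj, hmax⟩ : ∃ j, u j ≠ 0 ∧ ∀ i, (u i).natDegree ≤ (u j).natDegree := by
    obtain ⟨i, hi⟩ := Function.ne_iff.1 hu
    obtain ⟨j, hj, hmax⟩ := Set.exists_max_image {i | u i ≠ 0} (fun i ↦ (u i).natDegree)
      (Set.toFinite _) ⟨i, hi⟩
    refine ⟨j, hj, fun i ↦ ?_⟩
    by_cases hi : u i = 0
    · simp [hi]
    · exact hmax i hi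
  have hdeg := haniso.natDegree_aeval hq hj hmax
  have hne : aeval u q ≠ 0 := fun h ↦
    haniso.coeff_aeval_ne_zero hq hj hmax (by rw [h, Polynomial.coeff_zero])
  obtain ⟨g, hg⟩ := hpu
  rw [hg] at hne hdeg
  rw [Polynomial.natDegree_mul (left_ne_zero_of_mul hne) (right_ne_zero_of_mul hne)] at hdeg
  have hup := hup j
  obtain ⟨p', hp', hodd', hdvd⟩ := exists_irreducible_dvd_of_odd_natDegree
    (g := g) (by grind)
  have := Polynomial.natDegree_le_of_dvd hdvd (right_ne_zero_of_mul hne)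
  exact ⟨p', hp', hodd', by omega, hg ▸ hdvd.mul_left p⟩

lemma IsAnisotropic.dvd_of_dvd_aeval [Finite ι] (haniso : IsAnisotropic F q)
    (hq : q.IsHomogeneous 2) {p : F[X]} (hp : Irreducible p) (hodd : Odd p.natDegree)
    {f : ι → F[X]} (hpf : p ∣ aeval f q) (i : ι) : p ∣ f i := by
  induction hN : p.natDegree using Nat.strong_induction_on generalizing p f i with
  | _ N ih =>
  subst hN
  have hmod : p ∣ aeval (fun i ↦ f i % p) q :=
    (dvd_iff_dvd_of_dvd_sub (dvd_aeval_sub_aeval q fun i ↦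
      ⟨f i / p, by rw [EuclideanDomain.mod_eq_sub_mul_div]; ring⟩)).1 hpf
  suffices (fun i ↦ f i % p) = 0 from EuclideanDomain.mod_eq_zero.1 (congrFun this i)
  by_contra hne
  obtain ⟨g, u, hgu, hprim⟩ := exists_eq_smul_of_ne_zero hne
  rw [hgu] at hne hmod
  obtain ⟨hg, hu⟩ := smul_ne_zero_iff.1 hne
  have hlt (i) (hi : u i ≠ 0) : g.natDegree + (u i).natDegree < p.natDegree := by
    rw [← Polynomial.natDegree_mul hg hi, ← smul_eq_mul, ← Pi.smul_apply, ← hgu]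
    exact Polynomial.natDegree_mod_lt _ hodd.pos.ne'
  have hpg : ¬ p ∣ g := by
    obtain ⟨j, hj⟩ := Function.ne_iff.1 hu
    exact Polynomial.not_dvd_of_natDegree_lt hg ((Nat.le_add_right _ _).trans_lt (hlt j hj))
  have hpu : p ∣ aeval u q := by
    rw [aeval_smul_of_isHomogeneous hq] at hmod
    exact (hp.prime.dvd_or_dvd hmod).resolve_left (mt hp.prime.dvd_of_dvd_pow hpg)
  have hup (i) : (u i).natDegree < p.natDegree := by
    by_cases hi : u i = 0
    · simpa [hi] using hodd.pos
    · exact (Nat.le_add_left _ _).trans_lt (hlt i hi)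
  obtain ⟨p', hp', hodd', hlt', hdvd⟩ := haniso.exists_irreducible_dvd_aeval hq hodd hu hup hpu
  exact hp'.not_isUnit (hprim p' fun i ↦ ih _ hlt' hp' hodd' hdvd i rfl)

lemma IsAnisotropic.of_powerBasis [Finite ι] {K : Type*} [Field K] [Algebra F K]
    (pb : PowerBasis F K) (hodd : Odd pb.dim) (haniso : IsAnisotropic F q)
    (hq : q.IsHomogeneous 2) : IsAnisotropic K q := by
  intro v hv
  choose f hf using fun i ↦ pb.exists_eq_aeval' (v i)
  have hdvd : minpoly F pb.gen ∣ aeval f q := by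
    rw [minpoly.dvd_iff, comp_aeval_apply]
    simpa only [← hf] using hv
  have := pb.finite
  ext i
  rw [hf, Pi.zero_apply, ← minpoly.dvd_iff]
  refine haniso.dvd_of_dvd_aeval hq (minpoly.irreducible pb.isIntegral_gen) ?_ hdvd i
  rwa [pb.natDegree_minpoly]

lemma IsAnisotropic.of_algHom {R K K' : Type*} [CommSemiring R] [Field K] [CommSemiring K']
    [Nontrivial K'] [Algebra R K] [Algebra R K'] {q : MvPolynomial ι R} (φ : K →ₐ[R] K')
    (h : IsAnisotropic K' q) : IsAnisotropic K q := by
  intro v hv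
  have hφv := h (fun i ↦ φ (v i)) (by rw [← comp_aeval_apply, hv, map_zero])
  exact funext fun i ↦ (map_eq_zero φ).1 (congrFun hφv i)

/-- Springer's theorem. -/
theorem IsAnisotropic.of_odd_finrank [Finite ι] {L : Type*} [Field L] [Algebra F L]
    [FiniteDimensional F L] (haniso : IsAnisotropic F q) (hq : q.IsHomogeneous 2)
    (hodd : Odd (finrank F L)) : IsAnisotropic L q := by
  suffices ∀ K : IntermediateField F L, IsAnisotropic K q from
    (this ⊤).of_algHom IntermediateField.topEquiv.symm.toAlgHom
  refine IntermediateField.induction_on_adjoin _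
    (haniso.of_algHom (IntermediateField.botEquiv F L).toAlgHom) fun K x hK ↦ ?_
  have hK' : IsAnisotropic K (map (algebraMap F K) q) := fun w hw ↦
    hK w (by rwa [aeval_map_algebraMap] at hw)
  have hx := IsIntegral.of_finite K x
  have hdim : Odd (IntermediateField.adjoin.powerBasis hx).dim := by
    rw [← PowerBasis.finrank]
    rw [← Module.finrank_mul_finrank F K L] at hodd
    have := (Nat.odd_mul.1 hodd).2
    rw [← Module.finrank_mul_finrank K K⟮x⟯ L] at this
    exact (Nat.odd_mul.1 this).1
  have hKx : IsAnisotropic K⟮x⟯ q := fun v hv ↦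
    hK'.of_powerBasis _ hdim (hq.map _) v (by rwa [aeval_map_algebraMap])
  exact hKx

end Springer

section DiagonalForm

/-- The diagonal quadratic form with coefficients `c i`. -/
noncomputable def diagonalForm {ι R : Type*} [Fintype ι] [CommSemiring R] (c : ι → R) :
    MvPolynomial ι R :=
  ∑ i, C (c i) * X i ^ 2

lemma isHomogeneous_diagonalForm {ι R : Type*} [Fintype ι] [CommSemiring R] (c : ι → R) :
    (diagonalForm c).IsHomogeneous 2 :=
  .sum _ _ _ fun i _ ↦ (isHomogeneous_X_pow i 2).C_mul _

lemma aeval_diagonalForm {ι R A : Type*} [Fintype ι] [CommSemiring R] [CommSemiring A]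
    [Algebra R A] (c : ι → R) (x : ι → A) :
    aeval x (diagonalForm c) = ∑ i, algebraMap R A (c i) * x i ^ 2 := by
  simp [diagonalForm]

lemma eq_zero_of_sum_eq_zero_of_degree_injOn {σ κ R : Type*} [CommSemiring R]
    (m : MonomialOrder σ) {s : Finset κ} {f : κ → MvPolynomial σ R}
    (hdeg : {i | f i ≠ 0}.InjOn fun i ↦ m.degree (f i)) (hsum : ∑ i ∈ s, f i = 0)
    {i : κ} (hi : i ∈ s) : f i = 0 := by
  by_contra hfi
  obtain ⟨j, ⟨hjs, hj⟩, hmax⟩ := Set.exists_max_image {j | j ∈ s ∧ f j ≠ 0}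
    (fun j ↦ m.toSyn (m.degree (f j))) (s.finite_toSet.subset fun j hj ↦ hj.1) ⟨i, hi, hfi⟩
  have hcoeff (l) (hl : l ∈ s) (hne : l ≠ j) : (f l).coeff (m.degree (f j)) = 0 := by
    by_cases hfl : f l = 0
    · rw [hfl, coeff_zero]
    · refine m.coeff_eq_zero_of_lt ((hmax l ⟨hl, hfl⟩).lt_of_ne fun h ↦ ?_)
      exact hne (hdeg hfl hj (m.toSyn.injective h))
  apply_fun coeff (m.degree (f j)) at hsum
  rw [coeff_sum, Finset.sum_eq_single_of_mem j hjs hcoeff, coeff_zero] at hsum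
  exact m.coeff_degree_ne_zero_iff.2 hj hsum

theorem isAnisotropic_diagonalForm_X (ι R : Type*) [Fintype ι] [CommRing R] [IsDomain R] :
    IsAnisotropic (MvPolynomial ι R) (diagonalForm (X : ι → MvPolynomial ι R)) := by
  intro v hv
  let _ : LinearOrder ι := IsWellOrder.linearOrder WellOrderingRel
  have hdegree (i) (hi : v i ≠ 0) : MonomialOrder.lex.degree (X i * v i ^ 2) =
      Finsupp.single i 1 + 2 • MonomialOrder.lex.degree (v i) := by
    rw [MonomialOrder.lex.degree_mul (X_ne_zero i) (pow_ne_zero 2 hi), MonomialOrder.degree_X,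
      MonomialOrder.degree_pow]
  -- The exponent of `X i` is odd in the leading term of the `i`-th summand only.
  have hinj : {i | X i * v i ^ 2 ≠ 0}.InjOn
      fun i ↦ MonomialOrder.lex.degree (X i * v i ^ 2) := by
    intro i hi j hj hij
    by_contra hne
    have hvi : v i ≠ 0 := by rintro h; simp [h] at hi
    have hvj : v j ≠ 0 := by rintro h; simp [h] at hj
    have := DFunLike.congr_fun ((hdegree i hvi).symm.trans (hij.trans (hdegree j hvj))) i
    simp [Finsupp.single_eq_of_ne hne] at this
    omega
  have hsum : ∑ i, X i * v i ^ 2 = 0 := by simpa [aeval_diagonalForm] using hv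
  ext1 i
  simpa using eq_zero_of_sum_eq_zero_of_degree_injOn _ hinj hsum (Finset.mem_univ i)

theorem IsAnisotropic.of_isFractionRing {ι R K : Type*} [Finite ι] [CommRing R] [CommRing K]
    [Algebra R K] [IsFractionRing R K] {q : MvPolynomial ι R} {m : ℕ} (hq : q.IsHomogeneous m)
    (h : IsAnisotropic R q) : IsAnisotropic K q := by
  intro v hv
  obtain ⟨b, hb⟩ := IsLocalization.exist_integer_multiples_of_finite (nonZeroDivisors R) v
  choose w hw using hb
  have hunit := IsLocalization.map_units K b
  have hw' : algebraMap R K ∘ w = algebraMap R K b • v :=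
    funext fun i ↦ by rw [Function.comp_apply, hw, Algebra.smul_def, Pi.smul_apply, smul_eq_mul]
  have hwq : aeval w q = 0 := by
    apply IsFractionRing.injective R K
    rw [← aeval_algebraMap_apply, hw', aeval_smul_of_isHomogeneous hq, hv, mul_zero, map_zero]
  rw [← hunit.smul_eq_zero, ← hw', h w hwq]
  exact funext fun i ↦ map_zero _

theorem exists_isAnisotropic_diagonalForm (ι : Type v) (k : Type u) [Fintype ι] [Field k] :
    ∃ (F : Type (max u v)) (_ : Field F) (_ : Algebra k F) (c : ι → F),
      IsAnisotropic F (diagonalForm c) := by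
  refine ⟨FractionRing (MvPolynomial ι k), inferInstance, inferInstance,
    fun i ↦ algebraMap (MvPolynomial ι k) _ (X i), fun v hv ↦ ?_⟩
  refine (isAnisotropic_diagonalForm_X ι k).of_isFractionRing (isHomogeneous_diagonalForm _) v ?_
  simpa [aeval_diagonalForm] using hv

end DiagonalForm

section Antipodal

variable {ι : Type v} {F : Type u}

/-- The odd part of `g`, made homogeneous of degree `2 * g.totalDegree + 1` by multiplying its
components with powers of `q`. It is meant for `q` homogeneous of degree `2`, and agrees with the
odd part of `g` on the locus `q = 1`. -/
noncomputable def oddHomogenization [CommSemiring F] (q g : MvPolynomial ι F) :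
    MvPolynomial ι F :=
  ∑ m ∈ (Finset.range (g.totalDegree + 1)).filter Odd,
    homogeneousComponent m g * q ^ (g.totalDegree - m / 2)

lemma isHomogeneous_oddHomogenization [CommSemiring F] {q : MvPolynomial ι F}
    (hq : q.IsHomogeneous 2) (g : MvPolynomial ι F) :
    (oddHomogenization q g).IsHomogeneous (2 * g.totalDegree + 1) := by
  refine .sum _ _ _ fun m hm ↦ ?_
  obtain ⟨hm, hodd⟩ := Finset.mem_filter.1 hm
  convert (homogeneousComponent_isHomogeneous m g).mul (hq.pow (g.totalDegree - m / 2)) using 1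
  grind

lemma aeval_sub_aeval_neg {A : Type*} [CommRing F] [CommRing A] [Algebra F A]
    {q : MvPolynomial ι F} (g : MvPolynomial ι F) {μ : ι → A} (hμ : aeval μ q = 1) :
    aeval μ g - aeval (-μ) g = 2 * aeval μ (oddHomogenization q g) := by
  have hcomp (m : ℕ) : aeval μ (homogeneousComponent m g) - aeval (-μ) (homogeneousComponent m g) =
      if Odd m then 2 * aeval μ (homogeneousComponent m g) else 0 := by
    rw [← neg_one_smul A μ, aeval_smul_of_isHomogeneous (homogeneousComponent_isHomogeneous m g)]
    split_ifs with hm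
    · rw [hm.neg_one_pow]
      ring
    · rw [(Nat.not_odd_iff_even.1 hm).neg_one_pow, one_mul, sub_self]
  have hodd : aeval μ (oddHomogenization q g) =
      ∑ m ∈ (Finset.range (g.totalDegree + 1)).filter Odd, aeval μ (homogeneousComponent m g) := by
    simp only [oddHomogenization, map_sum, map_mul, map_pow, hμ, one_pow, mul_one]
  rw [hodd, Finset.mul_sum, Finset.sum_filter]
  nth_rw 1 2 [← sum_homogeneousComponent g]
  simp only [map_sum, ← Finset.sum_sub_distrib, hcomp]

theorem IsAnisotropic.exists_antipodal [Fintype ι] [Field F] {Ω : Type*} [Field Ω] [IsAlgClosed Ω]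
    [Algebra F Ω] {q : MvPolynomial ι F} (haniso : IsAnisotropic F q) (hq : q.IsHomogeneous 2)
    (s : Finset (MvPolynomial ι F)) (hs : s.card < Fintype.card ι) :
    ∃ μ : ι → Ω, aeval μ q = 1 ∧ ∀ g ∈ s, aeval μ g = aeval (-μ) g := by
  classical
  obtain ⟨L, _, _, _, hodd, v, hv, hvs⟩ := exists_odd_finrank_point
    (s.image (oddHomogenization q))
    (Finset.forall_mem_image.2 fun g _ ↦
      ⟨_, odd_two_mul_add_one _, isHomogeneous_oddHomogenization hq g⟩)
    (Finset.card_image_le.trans_lt hs)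
  have hqv : aeval v q ≠ 0 := mt (haniso.of_odd_finrank hq hodd v) hv
  let e : L →ₐ[F] Ω := IsAlgClosed.lift
  obtain ⟨z, hz⟩ := IsAlgClosed.exists_pow_nat_eq (e (aeval v q)) two_pos
  have hz0 : z ^ 2 ≠ 0 := by rwa [hz, map_ne_zero]
  have hμ {f : MvPolynomial ι F} {d : ℕ} (hf : f.IsHomogeneous d) :
      aeval (z⁻¹ • fun i ↦ e (v i)) f = z⁻¹ ^ d * e (aeval v f) := by
    rw [aeval_smul_of_isHomogeneous hf, comp_aeval_apply]
  have hμq : aeval (z⁻¹ • fun i ↦ e (v i)) q = 1 := by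
    rw [hμ hq, ← hz, inv_pow, inv_mul_cancel₀ hz0]
  refine ⟨_, hμq, fun g hg ↦ sub_eq_zero.1 ?_⟩
  rw [aeval_sub_aeval_neg g hμq, hμ (isHomogeneous_oddHomogenization hq g),
    hvs _ (Finset.mem_image_of_mem _ hg), map_zero, mul_zero, mul_zero]

end Antipodal

section Quadric

lemma sum_neg_mul_neg {ι A : Type*} [Fintype ι] [NonUnitalNonAssocRing A] {x y : ι → A} {a : A}
    (h : ∑ i, x i * y i = a) : ∑ i, (-x) i * (-y) i = a := by
  simpa only [Pi.neg_apply, neg_mul_neg] using h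

lemma adjoin_equalizer_id_ne_top {R T Ω : Type*} [CommSemiring R] [CommSemiring T] [Semiring Ω]
    [Algebra R T] (σ : T →ₐ[R] T) (φ : T →+* Ω) {s : Set T} (hs : ∀ t ∈ s, φ (σ t) = φ t)
    {x : T} (hx : φ (σ x) ≠ φ x) :
    Algebra.adjoin (AlgHom.equalizer σ (AlgHom.id R T)) s ≠ ⊤ := by
  intro htop
  have hmem : x ∈ Algebra.adjoin (AlgHom.equalizer σ (AlgHom.id R T)) s :=
    htop ▸ Algebra.mem_top
  refine hx ?_
  clear hx
  induction hmem using Algebra.adjoin_induction with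
  | mem t ht => exact hs t ht
  | algebraMap c => exact congrArg φ c.2
  | add a b _ _ ha hb => rw [map_add, map_add, map_add, ha, hb]
  | mul a b _ _ ha hb => rw [map_mul, map_mul, map_mul, ha, hb]

/-- The substitution `y i = c i * x i`, which turns `∑ i, x i * y i` into the diagonal form with
coefficients `c i`. -/
noncomputable def diagonalSubstitution {ι k F : Type*} [CommSemiring k] [CommSemiring F]
    [Algebra k F] (c : ι → F) : MvPolynomial (ι ⊕ ι) k →ₐ[k] MvPolynomial ι F :=
  aeval (Sum.elim X fun i ↦ C (c i) * X i)

lemma aeval_diagonalSubstitution {ι k F A : Type*} [CommSemiring k] [CommSemiring F]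
    [CommSemiring A] [Algebra k F] [Algebra F A] [Algebra k A] [IsScalarTower k F A]
    (c : ι → F) (x : ι → A) (p : MvPolynomial (ι ⊕ ι) k) :
    aeval x (diagonalSubstitution c p) =
      aeval (Sum.elim x fun i ↦ algebraMap F A (c i) * x i) p := by
  suffices ((aeval x).restrictScalars k).comp (diagonalSubstitution c) =
    aeval (Sum.elim x fun i ↦ algebraMap F A (c i) * x i) from DFunLike.congr_fun this p
  refine MvPolynomial.algHom_ext fun i ↦ ?_
  rcases i with i | i <;> simp [diagonalSubstitution]

variable {k : Type u} [Field k] {r : ℕ}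

/-- The point `(x, y)` of the affine quadric `Spec T`, as an evaluation homomorphism. -/
noncomputable def pointEval {A : Type*} [CommRing A] [Algebra k A] (x y : Fin r → A)
    (h : ∑ i, x i * y i = 1) : Tring k r →ₐ[k] A :=
  Ideal.Quotient.liftₐ (hypIdeal k r) (aeval (Sum.elim x y)) fun p hp ↦
    (Ideal.span_le (I := RingHom.ker (aeval (R := k) (Sum.elim x y)))).2 (by simp [h]) hp

@[simp]
lemma pointEval_mk {A : Type*} [CommRing A] [Algebra k A] (x y : Fin r → A)
    (h : ∑ i, x i * y i = 1) (p : MvPolynomial (Fin r ⊕ Fin r) k) :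
    pointEval x y h (Ideal.Quotient.mk (hypIdeal k r) p) = aeval (Sum.elim x y) p :=
  rfl

lemma pointEval_apply_eq_pointEval_neg {A : Type*} [CommRing A] [Algebra k A]
    (σ : Tring k r →ₐ[k] Tring k r) (hσx : ∀ j, σ (Tx k r j) = -Tx k r j)
    (hσy : ∀ j, σ (Ty k r j) = -Ty k r j) (x y : Fin r → A) (h : ∑ i, x i * y i = 1)
    (t : Tring k r) :
    pointEval x y h (σ t) = pointEval (-x) (-y) (sum_neg_mul_neg h) t := by
  suffices (pointEval x y h).comp σ = pointEval (-x) (-y) (sum_neg_mul_neg h) from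
    DFunLike.congr_fun this t
  refine Ideal.Quotient.algHom_ext _ (MvPolynomial.algHom_ext fun i ↦ ?_)
  rcases i with j | j
  · simpa using congrArg (pointEval x y h) (hσx j)
  · simpa using congrArg (pointEval x y h) (hσy j)

lemma exists_pointEval_neg_ne {A : Type*} [Field A] [Algebra k A] (hchar : (2 : k) ≠ 0)
    {x y : Fin r → A} (h : ∑ i, x i * y i = 1) :
    ∃ t, pointEval (k := k) (-x) (-y) (sum_neg_mul_neg h) t ≠ pointEval x y h t := by
  obtain ⟨j, -, hj⟩ : ∃ j ∈ Finset.univ, x j * y j ≠ 0 :=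
    Finset.exists_ne_zero_of_sum_ne_zero (h ▸ one_ne_zero)
  have h2 : (2 : A) ≠ 0 := by
    rw [← map_ofNat (algebraMap k A) 2]
    exact (map_ne_zero _).2 hchar
  refine ⟨Tx k r j, fun hfix ↦ mul_ne_zero h2 (left_ne_zero_of_mul hj) ?_⟩
  have hneg : -x j = x j := by simpa using hfix
  linear_combination -hneg

theorem exists_pointEval_eq_pointEval_neg {F Ω : Type*} [Field F] [Field Ω] [IsAlgClosed Ω]
    [Algebra k F] [Algebra F Ω] [Algebra k Ω] [IsScalarTower k F Ω] {c : Fin r → F}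
    (hc : IsAnisotropic F (diagonalForm c)) (s : Finset (Tring k r)) (hs : s.card < r) :
    ∃ (x y : Fin r → Ω) (h : ∑ i, x i * y i = 1),
      ∀ t ∈ s, pointEval x y h t = pointEval (-x) (-y) (sum_neg_mul_neg h) t := by
  classical
  obtain ⟨x, hx, hxs⟩ := hc.exists_antipodal (Ω := Ω) (isHomogeneous_diagonalForm c)
    (s.image fun t ↦ diagonalSubstitution c t.out) (Finset.card_image_le.trans_lt (by simpa))
  have h : ∑ i, x i * (algebraMap F Ω (c i) * x i) = 1 := by
    rw [← hx, aeval_diagonalForm]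
    exact Finset.sum_congr rfl fun i _ ↦ by ring
  have hy : (fun i ↦ algebraMap F Ω (c i) * (-x) i) = -fun i ↦ algebraMap F Ω (c i) * x i :=
    funext fun i ↦ mul_neg _ _
  refine ⟨x, _, h, fun t ht ↦ ?_⟩
  have hxt := hxs _ (Finset.mem_image_of_mem _ ht)
  rw [aeval_diagonalSubstitution, aeval_diagonalSubstitution, hy] at hxt
  rwa [← Ideal.Quotient.mk_out t, pointEval_mk, pointEval_mk]

end Quadric

end DeletedQuadric

open DeletedQuadric in
theorem deleted_quadric_algebra_needs_r_generators_general
    (k : Type u) [Field k] (hchar : (2 : k) ≠ 0) (r : ℕ)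
    (σ : Tring k r ≃ₐ[k] Tring k r)
    (hσx : ∀ j, σ (Tx k r j) = -Tx k r j) (hσy : ∀ j, σ (Ty k r j) = -Ty k r j)
    (s : Finset (Tring k r)) (hs : s.card < r) :
    Algebra.adjoin (AlgHom.equalizer σ.toAlgHom (AlgHom.id k (Tring k r)))
      (s : Set (Tring k r)) ≠ ⊤ := by
  obtain ⟨F, _, _, c, hc⟩ := exists_isAnisotropic_diagonalForm (Fin r) k
  obtain ⟨x, y, h, hfix⟩ := exists_pointEval_eq_pointEval_neg (Ω := AlgebraicClosure F) hc s hs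
  obtain ⟨t₀, ht₀⟩ := exists_pointEval_neg_ne hchar h
  have hσ := pointEval_apply_eq_pointEval_neg σ.toAlgHom hσx hσy x y h
  exact adjoin_equalizer_id_ne_top σ.toAlgHom (pointEval x y h).toRingHom
    (fun t ht ↦ (hσ t).trans (hfix t ht).symm) ((hσ t₀).trans_ne ht₀)

/-- Let `k` be a field of characteristic `≠ 2` containing a square root
of `−1`, let `r ≥ 1`, `T = k[x,y]/(Σ xᵢyᵢ − 1)`, `σ` the `k`-algebra automorphism of `T`
negating all variables, and `R = T^σ` the fixed subring. Then `T` cannot be generated as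
an `R`-algebra by fewer than `r` elements: any `r − 1` elements of `T` generate a proper
`R`-subalgebra. -/
theorem deleted_quadric_algebra_needs_r_generators
    (k : Type u) [Field k] (hchar : (2 : k) ≠ 0) (i : k) (hi : i ^ 2 = -1)
    (r : ℕ) (hr : 1 ≤ r)
    (σ : Tring k r ≃ₐ[k] Tring k r)
    (hσx : ∀ j, σ (Tx k r j) = - Tx k r j) (hσy : ∀ j, σ (Ty k r j) = - Ty k r j)
    (t : Fin (r - 1) → Tring k r) :
    Algebra.adjoin (↥(AlgHom.equalizer σ.toAlgHom (AlgHom.id k (Tring k r))))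
      (Set.range t) ≠ ⊤ := by
  classical
  simpa only [Finset.coe_image, Finset.coe_univ, Set.image_univ] using
    deleted_quadric_algebra_needs_r_generators_general k hchar r σ hσx hσy (Finset.univ.image t)
      (Finset.card_image_le.trans_lt (by simp only [Finset.card_univ, Fintype.card_fin]; omega))
end

section
/- Let k be a field of characteristic different from 2, and let L = k[x, y][(x−y)^{−1}] be the localization of the polynomial ring k[x, y] at the element x − y. Let τ be the k-algebra automorphism of L induced by swapping x and y. Then the fixed subring L^τ = {f ∈ L : τ(f) = f} is equal to the k-subalgebra of L generated by the three elements x + y, (x − y)², and (x − y)^{−2}. -/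
open MvPolynomial

/-- The localization `L = k[x, y][(x − y)⁻¹]`, with `x = X 0` and `y = X 1`. -/
noncomputable abbrev Lring (k : Type u) [Field k] :=
  Localization.Away (X 0 - X 1 : MvPolynomial (Fin 2) k)

/-- The image of `x` in `L`. -/
noncomputable abbrev Lx (k : Type u) [Field k] : Lring k :=
  algebraMap (MvPolynomial (Fin 2) k) (Lring k) (X 0)

/-- The image of `y` in `L`. -/
noncomputable abbrev Ly (k : Type u) [Field k] : Lring k :=
  algebraMap (MvPolynomial (Fin 2) k) (Lring k) (X 1)

/-- The element `(x − y)⁻¹` of `L`. -/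
noncomputable abbrev LinvXsubY (k : Type u) [Field k] : Lring k :=
  IsLocalization.Away.invSelf (X 0 - X 1 : MvPolynomial (Fin 2) k)

/-!
The swap `τ` fixes `x + y` and negates both `x - y` and `(x - y)⁻¹`. Let `A` be the subalgebra
generated by `x + y`, `(x - y)²` and `(x - y)⁻²`. As `2` is invertible, `x` and `y` are combinations
of `x + y` and `x - y`, so the negated elements `x - y` and `(x - y)⁻¹` generate `L` over `A`. Their
pairwise products lie in `A`, hence every `f ∈ L` is `a + b` with `a ∈ A` and `b` in their `A`-span,
and `τ f = a - b`. If `τ f = f` then `2b = 0`, so `f = a ∈ A`.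
-/

open scoped Pointwise in
theorem toSubmodule_adjoin_eq_one_sup_span {R S : Type*} [CommSemiring R] [Semiring S]
    [Algebra R S] {s : Set S} (hs : s * s ⊆ ↑(1 : Submodule R S)) :
    Subalgebra.toSubmodule (Algebra.adjoin R s) = 1 ⊔ Submodule.span R s := by
  set M := 1 ⊔ Submodule.span R s
  have hspan : Submodule.span R s * Submodule.span R s ≤ 1 := by
    rw [Submodule.span_mul_span]
    exact Submodule.span_le.mpr hs
  have hmul : M * M ≤ M := by
    simp only [M, Submodule.sup_mul, Submodule.mul_sup, one_mul, mul_one]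
    exact sup_le le_rfl (sup_le le_sup_right (hspan.trans le_sup_left))
  apply le_antisymm
  · let B : Subalgebra R S := M.toSubalgebra
      (Submodule.mem_sup_left (Submodule.one_le.mp le_rfl))
      fun _ _ ha hb => hmul (Submodule.mul_mem_mul ha hb)
    have hsB : s ⊆ B := fun _ hd => Submodule.mem_sup_right (Submodule.subset_span hd)
    exact fun _ hz => Algebra.adjoin_le hsB hz
  · exact sup_le (Submodule.one_le.mpr (one_mem (Algebra.adjoin R s)))
      (Algebra.span_le_adjoin R s)

theorem map_eq_neg_of_mem_span {R M : Type*} [Semiring R] [AddCommGroup M] [Module R M]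
    {φ : M →ₗ[R] M} {s : Set M} (hs : ∀ d ∈ s, φ d = -d) {b : M}
    (hb : b ∈ Submodule.span R s) : φ b = -b :=
  LinearMap.eqOn_span (g := -LinearMap.id) hs hb

theorem map_eq_neg_of_mul_eq_one {S : Type*} [CommRing S] {σ : S →+* S} {d i : S}
    (hd : σ d = -d) (hi : d * i = 1) : σ i = -i := by
  have hσ : -d * σ i = 1 := by rw [← hd, ← map_mul, hi, map_one]
  linear_combination (-i) * hσ - σ i * hi

open scoped Pointwise in
theorem equalizer_id_eq_of_adjoin_negated_eq_top {R S : Type*} [CommSemiring R] [CommRing S]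
    [Algebra R S] (h2 : IsLeftRegular (2 : S)) {σ : S →ₐ[R] S} {A : Subalgebra R S}
    (hA : A ≤ AlgHom.equalizer σ (AlgHom.id R S)) {D : Set S} (hD : ∀ d ∈ D, σ d = -d)
    (hDD : D * D ⊆ A) (hgen : Algebra.adjoin A D = ⊤) :
    AlgHom.equalizer σ (AlgHom.id R S) = A := by
  refine le_antisymm (fun f (hf : σ f = f) => ?_) hA
  let σA : S →ₐ[A] S := { σ with commutes' := fun a => hA a.2 }
  have hDD_one : D * D ⊆ ↑(1 : Submodule A S) :=
    fun z hz => Submodule.mem_one.mpr ⟨⟨z, hDD hz⟩, rfl⟩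
  have hf_mem : f ∈ (1 : Submodule A S) ⊔ Submodule.span A D := by
    rw [← toSubmodule_adjoin_eq_one_sup_span hDD_one, hgen]
    exact Submodule.mem_top
  obtain ⟨a, ha, b, hb, rfl⟩ := Submodule.mem_sup.mp hf_mem
  obtain ⟨a, rfl⟩ := Submodule.mem_one.mp ha
  have hσa : σ (algebraMap A S a) = algebraMap A S a := hA a.2
  have hσb : σ b = -b := map_eq_neg_of_mem_span (φ := σA.toLinearMap) hD hb
  rw [map_add, hσa, hσb] at hf
  have htwo_mul : 2 * b = 2 * 0 := by linear_combination -hf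
  rw [h2 htwo_mul, add_zero]
  exact a.2

theorem mem_and_mem_of_add_mem_of_sub_mem {R M : Type*} [Ring R] [AddCommGroup M] [Module R M]
    (h2 : IsUnit (2 : R)) {N : Submodule R M} {x y : M} (hadd : x + y ∈ N) (hsub : x - y ∈ N) :
    x ∈ N ∧ y ∈ N := by
  have hx : (2 : R) • x = (x + y) + (x - y) := by rw [two_smul]; abel
  have hy : (2 : R) • y = (x + y) - (x - y) := by rw [two_smul]; abel
  rw [← N.smul_mem_iff_of_isUnit h2, ← N.smul_mem_iff_of_isUnit (x := y) h2, hx, hy]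
  exact ⟨add_mem hadd hsub, sub_mem hadd hsub⟩

section Swap

variable {R S : Type*} [CommRing R] [CommRing S] [Algebra R S]

theorem adjoin_insert_sub_eq_top (h2 : IsUnit (2 : R)) {A : Subalgebra R S} {x y : S} {s : Set S}
    (hadd : x + y ∈ A) (hgen : Algebra.adjoin R (insert x (insert y s)) = ⊤) :
    Algebra.adjoin A (insert (x - y) s) = ⊤ := by
  let B : Subalgebra R S := (Algebra.adjoin A (insert (x - y) s)).restrictScalars R
  have hsub_mem : x - y ∈ B := Algebra.subset_adjoin (R := A) (Set.mem_insert _ _)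
  have hs : s ⊆ B := (Set.subset_insert _ _).trans (Algebra.subset_adjoin (R := A))
  have hadd_mem : x + y ∈ B := (Algebra.adjoin A _).algebraMap_mem ⟨x + y, hadd⟩
  obtain ⟨hx, hy⟩ := mem_and_mem_of_add_mem_of_sub_mem h2
    (N := Subalgebra.toSubmodule B) hadd_mem hsub_mem
  have hB : (⊤ : Subalgebra R S) ≤ B :=
    hgen ▸ Algebra.adjoin_le (Set.insert_subset hx (Set.insert_subset hy hs))
  exact Algebra.eq_top_iff.mpr fun _ => hB Algebra.mem_top

theorem equalizer_id_eq_adjoin_of_swap (h2 : IsUnit (2 : R)) {τ : S →ₐ[R] S} {x y i : S}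
    (hx : τ x = y) (hy : τ y = x) (hi : (x - y) * i = 1)
    (hgen : Algebra.adjoin R {x, y, i} = ⊤) :
    AlgHom.equalizer τ (AlgHom.id R S) = Algebra.adjoin R {x + y, (x - y) ^ 2, i ^ 2} := by
  have hτ_sub : τ (x - y) = -(x - y) := by rw [map_sub, hx, hy, neg_sub]
  have hτ_inv : τ i = -i := map_eq_neg_of_mul_eq_one (σ := τ.toRingHom) hτ_sub hi
  set A := Algebra.adjoin R {x + y, (x - y) ^ 2, i ^ 2}
  have hadd_mem : x + y ∈ A := Algebra.subset_adjoin (by simp)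
  have hsq_mem : (x - y) ^ 2 ∈ A := Algebra.subset_adjoin (by simp)
  have hinv_sq_mem : i ^ 2 ∈ A := Algebra.subset_adjoin (by simp)
  have hA : A ≤ AlgHom.equalizer τ (AlgHom.id R S) := by
    refine AlgHom.adjoin_le_equalizer _ _ ?_
    rintro _ (rfl | rfl | rfl)
    · simp [hx, hy, add_comm]
    · rw [map_pow, hτ_sub, neg_sq, AlgHom.id_apply]
    · rw [map_pow, hτ_inv, neg_sq, AlgHom.id_apply]
  have h2S : IsLeftRegular (2 : S) := by
    simpa only [map_ofNat] using (h2.map (algebraMap R S)).isRegular.left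
  refine equalizer_id_eq_of_adjoin_negated_eq_top (D := {x - y, i}) h2S hA ?_ ?_
    (adjoin_insert_sub_eq_top h2 hadd_mem hgen)
  · rintro _ (rfl | rfl) <;> assumption
  · rw [Set.mul_subset_iff]
    rintro _ (rfl | rfl) _ (rfl | rfl)
    · exact sq (x - y) ▸ hsq_mem
    · exact hi ▸ one_mem A
    · exact (mul_comm _ _).trans hi ▸ one_mem A
    · exact sq (_ : S) ▸ hinv_sq_mem

end Swap

theorem adjoin_insert_invSelf_eq_top {R A : Type*} (S : Type*) [CommSemiring R] [CommSemiring A]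
    [CommSemiring S] [Algebra R A] [Algebra A S] [Algebra R S] [IsScalarTower R A S] (a : A)
    [IsLocalization.Away a S] {s : Set A} (hs : Algebra.adjoin R s = ⊤) :
    Algebra.adjoin R (insert (IsLocalization.Away.invSelf a) (algebraMap A S '' s)) = ⊤ := by
  set B := Algebra.adjoin R (insert (IsLocalization.Away.invSelf a) (algebraMap A S '' s))
  have hinv : IsLocalization.Away.invSelf a ∈ B := Algebra.subset_adjoin (Set.mem_insert _ _)
  have hmap : (Algebra.adjoin R s).map (IsScalarTower.toAlgHom R A S) ≤ B := by
    rw [← Algebra.adjoin_image]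
    exact Algebra.adjoin_mono (Set.subset_insert _ _)
  refine Algebra.eq_top_iff.mpr fun z => ?_
  obtain ⟨n, p, hp⟩ := IsLocalization.Away.surj a z
  have hp_mem : algebraMap A S p ∈ B := hmap ⟨p, hs ▸ Algebra.mem_top, rfl⟩
  have hz : z = algebraMap A S p * IsLocalization.Away.invSelf a ^ n := by
    rw [← hp, mul_assoc, ← mul_pow, IsLocalization.Away.mul_invSelf, one_pow, mul_one]
  rw [hz]
  exact mul_mem hp_mem (pow_mem hinv n)

theorem fixed_subring_of_swap_on_localized_plane_general {R S : Type*} [CommRing R] [CommRing S]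
    [Algebra R S] [Algebra (MvPolynomial (Fin 2) R) S] [IsScalarTower R (MvPolynomial (Fin 2) R) S]
    [IsLocalization.Away (X 0 - X 1 : MvPolynomial (Fin 2) R) S] (h2 : IsUnit (2 : R))
    {τ : S →ₐ[R] S} {x y : S} (hx : algebraMap (MvPolynomial (Fin 2) R) S (X 0) = x)
    (hy : algebraMap (MvPolynomial (Fin 2) R) S (X 1) = y) (hτx : τ x = y) (hτy : τ y = x) :
    AlgHom.equalizer τ (AlgHom.id R S) =
      Algebra.adjoin R
        {x + y, (x - y) ^ 2,
          IsLocalization.Away.invSelf (X 0 - X 1 : MvPolynomial (Fin 2) R) ^ 2} := by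
  apply equalizer_id_eq_adjoin_of_swap h2 hτx hτy
  · rw [← hx, ← hy, ← map_sub, IsLocalization.Away.mul_invSelf]
  · have hrange : Set.range (X : Fin 2 → MvPolynomial (Fin 2) R) = {X 0, X 1} := by
      ext p
      simp [Fin.exists_fin_two, eq_comm]
    have hgen := adjoin_insert_invSelf_eq_top S (X 0 - X 1 : MvPolynomial (Fin 2) R)
      (adjoin_range_X (R := R))
    rwa [hrange, Set.image_pair, hx, hy, Set.insert_comm, Set.pair_comm] at hgen

/-- Let `k` be a field of characteristic `≠ 2` and
`L = k[x, y][(x − y)⁻¹]`. Let `τ` be the `k`-algebra automorphism of `L` induced by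
swapping `x` and `y`. Then the fixed subring `L^τ` is the `k`-subalgebra of `L` generated
by `x + y`, `(x − y)²` and `(x − y)⁻²`. -/
theorem fixed_subring_of_swap_on_localized_plane
    (k : Type u) [Field k] (hchar : (2 : k) ≠ 0)
    (τ : Lring k ≃ₐ[k] Lring k) (hx : τ (Lx k) = Ly k) (hy : τ (Ly k) = Lx k) :
    AlgHom.equalizer τ.toAlgHom (AlgHom.id k (Lring k)) =
      Algebra.adjoin k
        {Lx k + Ly k, (Lx k - Ly k) ^ 2, (LinvXsubY k) ^ 2} := by
  exact fixed_subring_of_swap_on_localized_plane_general hchar.isUnit rfl rfl hx hy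
end
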